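/- arXiv:2511.01161 — 2 statements merged into one kernel-verified Lean document; each statement's English description precedes it below -/
import Mathlib

section
/- Let n ≥ 1 be an integer, δ ∈ (0, n] and p ∈ (1, ∞). There exists a constant C > 0, depending only on n, δ and p, such that for every weight f ∈ A_{p,δ} with f(x) ∈ (0, ∞) for every x ∈ ℝⁿ and ln f ∈ L¹_loc(ℝⁿ, ℋ^δ_∞): (1) sup_Q (1/\~ℋ^δ_∞(Q)) ∫_Q exp(ln f(x) − (ln f)_{Q,δ}) d\~ℋ^δ_∞ ≤ C · [f]_{A_{p,δ}}, and (2) sup_Q (1/\~ℋ^δ_∞(Q)) ∫_Q exp(−(1/(p−1)) · (ln f(x) − (ln f)_{Q,δ})) d\~ℋ^δ_∞ ≤ C · [f]_{A_{p,δ}}^{1/(p−1)}, where the suprema are over all cubes Q of ℝⁿ. -/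
open scoped ENNReal
open Set MeasureTheory

noncomputable section

/-- An axis-parallel cube in `ℝⁿ`, described by its lower corner and positive side length. -/
structure Cube (n : ℕ) where
  corner : Fin n → ℝ
  side : ℝ
  side_pos : 0 < side

namespace Cube

/-- The half-open cube `∏ᵢ [cornerᵢ, cornerᵢ + side)` as a set of points. -/
def toSet {n : ℕ} (Q : Cube n) : Set (Fin n → ℝ) :=
  {x | ∀ i, Q.corner i ≤ x i ∧ x i < Q.corner i + Q.side}

/-- A cube is dyadic if it has the form `2^k·(z + [0,1)ⁿ)` with `k ∈ ℤ`, `z ∈ ℤⁿ`. -/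
def IsDyadic {n : ℕ} (Q : Cube n) : Prop :=
  ∃ (k : ℤ) (z : Fin n → ℤ), Q.side = (2:ℝ) ^ k ∧ ∀ i, Q.corner i = (z i : ℝ) * (2:ℝ) ^ k

/-- `Q'` is a dyadic subcube of `Q`, i.e. obtained from `Q` by repeated bisection. -/
def IsDyadicSubcube {n : ℕ} (Q' Q : Cube n) : Prop :=
  ∃ (k : ℕ) (z : Fin n → ℕ), (∀ i, z i < 2 ^ k) ∧
    Q'.side = Q.side / 2 ^ k ∧ ∀ i, Q'.corner i = Q.corner i + (z i : ℝ) * (Q.side / 2 ^ k)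

/-- The concentric dilate `t·Q` of a cube. -/
def dilate {n : ℕ} (Q : Cube n) (t : ℝ) (ht : 0 < t) : Cube n :=
  ⟨fun i => Q.corner i + Q.side / 2 - t * Q.side / 2, t * Q.side, mul_pos ht Q.side_pos⟩

end Cube

/-- The Hausdorff content `ℋ^δ_∞`. -/
def hContent (n : ℕ) (δ : ℝ) (E : Set (Fin n → ℝ)) : ℝ≥0∞ :=
  ⨅ (Qs : ℕ → Cube n) (_ : E ⊆ ⋃ i, (Qs i).toSet), ∑' i, ENNReal.ofReal ((Qs i).side ^ δ)

/-- The dyadic Hausdorff content `~ℋ^δ_∞`. -/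
def dContent (n : ℕ) (δ : ℝ) (E : Set (Fin n → ℝ)) : ℝ≥0∞ :=
  ⨅ (Qs : ℕ → Cube n) (_ : (∀ i, (Qs i).IsDyadic) ∧ E ⊆ ⋃ i, (Qs i).toSet),
    ∑' i, ENNReal.ofReal ((Qs i).side ^ δ)

/-- The Choquet integral `∫_E f dℋ^δ_∞`. -/
def integH (n : ℕ) (δ : ℝ) (f : (Fin n → ℝ) → ℝ) (E : Set (Fin n → ℝ)) : ℝ≥0∞ :=
  ∫⁻ t in Ioi (0:ℝ), hContent n δ {x | x ∈ E ∧ t < f x}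

/-- The Choquet integral `∫_E f d~ℋ^δ_∞` w.r.t. the dyadic Hausdorff content. -/
def integD (n : ℕ) (δ : ℝ) (f : (Fin n → ℝ) → ℝ) (E : Set (Fin n → ℝ)) : ℝ≥0∞ :=
  ∫⁻ t in Ioi (0:ℝ), dContent n δ {x | x ∈ E ∧ t < f x}

/-- A property holds `ℋ^δ_∞`-a.e. -/
def AEContent (n : ℕ) (δ : ℝ) (P : (Fin n → ℝ) → Prop) : Prop :=
  hContent n δ {x | ¬ P x} = 0

/-- `ℋ^δ_∞`-quasicontinuity. -/
def QuasiCont (n : ℕ) (δ : ℝ) (f : (Fin n → ℝ) → ℝ) : Prop :=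
  ∀ ε : ℝ, 0 < ε → ∃ O : Set (Fin n → ℝ),
    IsOpen O ∧ hContent n δ O < ENNReal.ofReal ε ∧ ContinuousOn f Oᶜ

/-- `L¹_loc(ℝⁿ, ℋ^δ_∞)`. -/
def MemL1loc (n : ℕ) (δ : ℝ) (f : (Fin n → ℝ) → ℝ) : Prop :=
  QuasiCont n δ f ∧ ∀ K : Set (Fin n → ℝ), IsCompact K → integH n δ (fun x => |f x|) K < ⊤

/-- `L^∞(ℝⁿ, ℋ^δ_∞)`. -/
def MemLinf (n : ℕ) (δ : ℝ) (f : (Fin n → ℝ) → ℝ) : Prop :=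
  QuasiCont n δ f ∧ ∃ M : ℝ, AEContent n δ (fun x => |f x| ≤ M)

/-- The `BMO(ℝⁿ, ℋ^δ_∞)` seminorm. -/
def bmoNorm (n : ℕ) (δ : ℝ) (f : (Fin n → ℝ) → ℝ) : ℝ≥0∞ :=
  ⨆ Q : Cube n, ⨅ c : ℝ,
    integH n δ (fun x => |f x - c|) Q.toSet / hContent n δ Q.toSet

/-- Membership in `BMO(ℝⁿ, ℋ^δ_∞)`. -/
def MemBMO (n : ℕ) (δ : ℝ) (f : (Fin n → ℝ) → ℝ) : Prop :=
  MemL1loc n δ f ∧ bmoNorm n δ f < ⊤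

/-- `essinf_{x ∈ Q} f := inf {t ∈ (0,∞) : ℋ^δ_∞({x ∈ Q : f x < t}) > 0}`. -/
def essInfQ (n : ℕ) (δ : ℝ) (f : (Fin n → ℝ) → ℝ) (Q : Cube n) : ℝ :=
  sInf {t : ℝ | 0 < t ∧ 0 < hContent n δ {x | x ∈ Q.toSet ∧ f x < t}}

/-- The `BLO(ℝⁿ, ℋ^δ_∞)` seminorm. -/
def bloNorm (n : ℕ) (δ : ℝ) (f : (Fin n → ℝ) → ℝ) : ℝ≥0∞ :=
  ⨆ Q : Cube n,
    integH n δ (fun x => |f x - essInfQ n δ f Q|) Q.toSet / hContent n δ Q.toSet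

/-- Membership in `BLO(ℝⁿ, ℋ^δ_∞)`. -/
def MemBLO (n : ℕ) (δ : ℝ) (f : (Fin n → ℝ) → ℝ) : Prop :=
  MemL1loc n δ f ∧ bloNorm n δ f < ⊤

/-- A weight: locally Choquet-integrable, quasicontinuous, positive `ℋ^δ_∞`-a.e. -/
def IsWeight (n : ℕ) (δ : ℝ) (w : (Fin n → ℝ) → ℝ) : Prop :=
  MemL1loc n δ w ∧ AEContent n δ (fun x => 0 < w x)

/-- The capacitary Muckenhoupt `A_{p,δ}` constant, for `p > 1`. -/
def apConst (n : ℕ) (δ p : ℝ) (w : (Fin n → ℝ) → ℝ) : ℝ≥0∞ :=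
  ⨆ Q : Cube n,
    (integH n δ w Q.toSet / hContent n δ Q.toSet) *
      (integH n δ (fun x => w x ^ (-(1 / (p - 1)))) Q.toSet / hContent n δ Q.toSet) ^ (p - 1)

/-- Membership in `A_{p,δ}`, `p > 1`. -/
def MemAp (n : ℕ) (δ p : ℝ) (w : (Fin n → ℝ) → ℝ) : Prop :=
  IsWeight n δ w ∧ apConst n δ p w < ⊤

/-- The Hardy–Littlewood maximal operator w.r.t. `ℋ^δ_∞`. -/
def maxOp (n : ℕ) (δ : ℝ) (g : (Fin n → ℝ) → ℝ) (x : Fin n → ℝ) : ℝ≥0∞ :=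
  ⨆ (Q : Cube n) (_ : x ∈ Q.toSet),
    integH n δ (fun y => |g y|) Q.toSet / hContent n δ Q.toSet

/-- The capacitary `A_{1,δ}` constant. -/
def a1Const (n : ℕ) (δ : ℝ) (w : (Fin n → ℝ) → ℝ) : ℝ≥0∞ :=
  sInf {c : ℝ≥0∞ | 0 < c ∧
    AEContent n δ (fun x => maxOp n δ w x ≤ c * ENNReal.ofReal (w x))}

/-- Membership in `A_{1,δ}`. -/
def MemA1 (n : ℕ) (δ : ℝ) (w : (Fin n → ℝ) → ℝ) : Prop :=
  IsWeight n δ w ∧ a1Const n δ w < ⊤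

/-- The `A_{p,δ}` constant for `p ∈ [1,∞)` (it is the `A_{1,δ}` constant when `p = 1`). -/
def apConstGen (n : ℕ) (δ p : ℝ) (w : (Fin n → ℝ) → ℝ) : ℝ≥0∞ :=
  if p = 1 then a1Const n δ w else apConst n δ p w

/-- Membership in `A_{p,δ}` for `p ∈ [1,∞)` (meaning `A_{1,δ}` when `p = 1`). -/
def MemApGen (n : ℕ) (δ p : ℝ) (w : (Fin n → ℝ) → ℝ) : Prop :=
  IsWeight n δ w ∧ apConstGen n δ p w < ⊤

/-- The weighted `BMO^q_w(ℝⁿ, ℋ^δ_∞)` seminorm. -/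
def bmoWNorm (n : ℕ) (δ q : ℝ) (w f : (Fin n → ℝ) → ℝ) : ℝ≥0∞ :=
  ⨆ Q : Cube n, ⨅ c : ℝ,
    (integH n δ (fun x => |f x - c| ^ q * w x) Q.toSet / integH n δ w Q.toSet) ^ (1 / q)

/-- Membership in `BMO^q_w(ℝⁿ, ℋ^δ_∞)`. -/
def MemBMOw (n : ℕ) (δ q : ℝ) (w f : (Fin n → ℝ) → ℝ) : Prop :=
  QuasiCont n δ f ∧
    (∀ K : Set (Fin n → ℝ), IsCompact K → integH n δ (fun x => |f x| ^ q * w x) K < ⊤) ∧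
    bmoWNorm n δ q w f < ⊤

/-- The integral average `f_{Q,δ}` with respect to the dyadic Hausdorff content. -/
def avgQ (n : ℕ) (δ : ℝ) (f : (Fin n → ℝ) → ℝ) (Q : Cube n) : ℝ :=
  ((integD n δ f (Q.toSet ∩ {x | 0 ≤ f x})).toReal -
      (integD n δ (fun x => -f x) (Q.toSet ∩ {x | f x < 0})).toReal) /
    ((dContent n δ (Q.toSet ∩ {x | 0 ≤ f x})).toReal +
      (dContent n δ (Q.toSet ∩ {x | f x < 0})).toReal)

/-!
A Choquet integral is not additive, but it does satisfy `∫ (c + l * g) ≥ c * μ E + l * ∫ g` for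
`g ≥ 0` and all real `c` and `l`. Integrating a tangent line of `exp` separately over `{0 ≤ f}` and
`{f < 0}` therefore gives Jensen's inequality with a factor `2`: `exp (l * avg f)` is at most
`2 * avg (exp (l * f))` for every real `l`. For `f = log w` the averages of `exp (l * f)` with
`l = 1` and `l = -1 / (p - 1)` are those in the `A_p` constant of `w`, up to a constant factor since
the dyadic content and the Hausdorff content are comparable. Using Jensen's inequality for one of
the two values of `l` to remove `avg f` from the average for the other yields the two bounds.
-/

open Filter Topology
open scoped NNReal

section Choquet

variable {α : Type*} {μ : OuterMeasure α} {f g : α → ℝ} {E F : Set α} {a b c s : ℝ}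

/-- The Choquet integral `∫_E f dμ` of the positive part of `f` against an outer measure `μ`;
`integD` is the case of the dyadic Hausdorff content. -/
def choquetIntegral (μ : OuterMeasure α) (f : α → ℝ) (E : Set α) : ℝ≥0∞ :=
  ∫⁻ t in Ioi (0 : ℝ), μ {x | x ∈ E ∧ t < f x}

theorem antitone_measure_lt (μ : OuterMeasure α) (f : α → ℝ) (E : Set α) :
    Antitone fun t => μ {x | x ∈ E ∧ t < f x} :=
  fun _ _ hst => measure_mono fun _ hx => ⟨hx.1, hst.trans_lt hx.2⟩

theorem choquetIntegral_mono (hEF : E ⊆ F) (hfg : ∀ x ∈ E, f x ≤ g x) :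
    choquetIntegral μ f E ≤ choquetIntegral μ g F :=
  lintegral_mono fun _ => measure_mono fun x hx => ⟨hEF hx.1, hx.2.trans_le (hfg x hx.1)⟩

theorem measure_le_ae_eq_measure_lt (μ : OuterMeasure α) (f : α → ℝ) (E : Set α) :
    (fun t => μ {x | x ∈ E ∧ t ≤ f x}) =ᵐ[volume] fun t => μ {x | x ∈ E ∧ t < f x} := by
  -- `t ↦ μ {t ≤ f}` jumps down on the right of every `t` at which the two functions differ
  refine ((countable_image_gt_image_Ioi fun t => μ {x | x ∈ E ∧ t ≤ f x}).mono
    fun t ht => ?_).measure_zero volume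
  have hlt : μ {x | x ∈ E ∧ t < f x} < μ {x | x ∈ E ∧ t ≤ f x} :=
    (measure_mono fun x hx => And.imp_right le_of_lt hx).lt_of_ne (Ne.symm ht)
  exact ⟨_, hlt, fun s hs => measure_mono fun x hx => ⟨hx.1, hs.trans_le hx.2⟩⟩

theorem ofReal_mul_measure_lt_le_choquetIntegral (μ : OuterMeasure α) (f : α → ℝ) (E : Set α)
    (t : ℝ) : ENNReal.ofReal t * μ {x | x ∈ E ∧ t < f x} ≤ choquetIntegral μ f E :=
  calc ENNReal.ofReal t * μ {x | x ∈ E ∧ t < f x}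
      = ∫⁻ _ in Ioo 0 t, μ {x | x ∈ E ∧ t < f x} := by simp [mul_comm]
    _ ≤ ∫⁻ r in Ioo 0 t, μ {x | x ∈ E ∧ r < f x} :=
        setLIntegral_mono' measurableSet_Ioo fun _ hr => antitone_measure_lt μ f E hr.2.le
    _ ≤ choquetIntegral μ f E := lintegral_mono_set Ioo_subset_Ioi_self

theorem choquetIntegral_eq_zero_iff_of_pos (hf : ∀ x ∈ E, 0 < f x) :
    choquetIntegral μ f E = 0 ↔ μ E = 0 := by
  refine ⟨fun hI => ?_, fun hE => ?_⟩
  · have hcover : E ⊆ ⋃ k : ℕ, {x | x ∈ E ∧ 1 / ((k : ℝ) + 1) < f x} := fun x hx =>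
      let ⟨k, hk⟩ := exists_nat_one_div_lt (hf x hx)
      mem_iUnion.2 ⟨k, hx, hk⟩
    refine measure_mono_null hcover (measure_iUnion_null fun k => ?_)
    have hmarkov := ofReal_mul_measure_lt_le_choquetIntegral μ f E (1 / ((k : ℝ) + 1))
    rw [hI, nonpos_iff_eq_zero, mul_eq_zero] at hmarkov
    exact hmarkov.resolve_left (ENNReal.ofReal_pos.2 Nat.one_div_pos_of_nat).ne'
  · have hnull (t : ℝ) : μ {x | x ∈ E ∧ t < f x} = 0 := measure_mono_null (fun _ hx => hx.1) hE
    simp only [choquetIntegral, hnull, lintegral_zero]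

theorem choquetIntegral_zero (μ : OuterMeasure α) (E : Set α) :
    choquetIntegral μ (fun _ => 0) E = 0 := by
  refine setLIntegral_eq_zero measurableSet_Ioi fun t ht => ?_
  simp [not_lt_of_gt (mem_Ioi.1 ht)]

theorem choquetIntegral_const_mul (μ : OuterMeasure α) (f : α → ℝ) (E : Set α) (hc : 0 ≤ c) :
    choquetIntegral μ (fun x => c * f x) E = ENNReal.ofReal c * choquetIntegral μ f E := by
  rcases hc.eq_or_lt with rfl | hc
  · simp [choquetIntegral_zero]
  have hpre : (c * ·) ⁻¹' Ioi (0 : ℝ) = Ioi 0 := by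
    ext u; simp [hc]
  have hscale : (ENNReal.ofReal c • volume).map (c * ·) = (volume : Measure ℝ) := by
    simpa only [Measure.map_smul, abs_of_pos hc] using Real.smul_map_volume_mul_left hc.ne'
  have hmeas := (antitone_measure_lt μ (fun x => c * f x) E).measurable
  rw [choquetIntegral, ← hscale, setLIntegral_map measurableSet_Ioi hmeas (by fun_prop), hpre,
    Measure.restrict_smul, lintegral_smul_measure]
  simp only [mul_lt_mul_iff_right₀ hc]
  rfl

theorem choquetIntegral_const_add_eq (μ : OuterMeasure α) (f : α → ℝ) (E : Set α) (hc : 0 ≤ c) :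
    choquetIntegral μ (fun x => c + f x) E =
      (∫⁻ t in Ioo 0 c, μ {x | x ∈ E ∧ t < c + f x}) + choquetIntegral μ f E := by
  have htail : ∫⁻ t in Ioi c, μ {x | x ∈ E ∧ t < c + f x} = choquetIntegral μ f E := by
    rw [← (measurePreserving_add_left volume c).setLIntegral_comp_preimage_emb
      (measurableEmbedding_addLeft c)]
    simp [choquetIntegral]
  rw [choquetIntegral, ← Ioc_union_Ioi_eq_Ioi hc,
    lintegral_union measurableSet_Ioi (Ioc_disjoint_Ioi le_rfl), htail,
    restrict_Ioo_eq_restrict_Ioc]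

theorem choquetIntegral_const_add_le (μ : OuterMeasure α) (f : α → ℝ) (E : Set α) (hc : 0 ≤ c) :
    choquetIntegral μ (fun x => c + f x) E ≤
      ENNReal.ofReal c * μ E + choquetIntegral μ f E := by
  rw [choquetIntegral_const_add_eq μ f E hc]
  gcongr
  calc ∫⁻ t in Ioo 0 c, μ {x | x ∈ E ∧ t < c + f x}
      ≤ ∫⁻ _ in Ioo 0 c, μ E := lintegral_mono fun _ => measure_mono fun _ hx => hx.1
    _ = ENNReal.ofReal c * μ E := by simp [mul_comm]

theorem choquetIntegral_const_add_of_nonneg (μ : OuterMeasure α) (hc : 0 ≤ c)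
    (hf : ∀ x ∈ E, 0 ≤ f x) :
    choquetIntegral μ (fun x => c + f x) E =
      ENNReal.ofReal c * μ E + choquetIntegral μ f E := by
  have hlevel : ∀ t ∈ Ioo 0 c, μ {x | x ∈ E ∧ t < c + f x} = μ E := fun t ht =>
    congrArg μ <| Subset.antisymm (fun _ hx => hx.1) fun x hx =>
      ⟨hx, ht.2.trans_le (le_add_of_nonneg_right (hf x hx))⟩
  rw [choquetIntegral_const_add_eq μ f E hc, setLIntegral_congr_fun measurableSet_Ioo hlevel]
  simp [mul_comm]

theorem ofReal_mul_measure_le_choquetIntegral_const_sub_add (μ : OuterMeasure α) (f : α → ℝ)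
    (E : Set α) (c : ℝ) :
    ENNReal.ofReal c * μ E ≤
      choquetIntegral μ (fun x => c - f x) E + choquetIntegral μ f E := by
  have hcover (t : ℝ) : μ E ≤ μ {x | x ∈ E ∧ t < c - f x} + μ {x | x ∈ E ∧ c - t ≤ f x} := by
    refine (measure_mono fun x hx => ?_).trans (measure_union_le _ _)
    rcases lt_or_ge t (c - f x) with ht | ht
    · exact Or.inl ⟨hx, ht⟩
    · exact Or.inr ⟨hx, sub_le_comm.1 ht⟩
  have hreflect : ∫⁻ t in Ioo 0 c, μ {x | x ∈ E ∧ c - t ≤ f x} =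
      ∫⁻ t in Ioo 0 c, μ {x | x ∈ E ∧ t ≤ f x} := by
    rw [← (volume.measurePreserving_sub_left c).setLIntegral_comp_preimage_emb
      (MeasurableEquiv.subLeft c).measurableEmbedding _ (Ioo 0 c)]
    simp
  calc ENNReal.ofReal c * μ E
      = ∫⁻ _ in Ioo 0 c, μ E := by simp [mul_comm]
    _ ≤ ∫⁻ t in Ioo 0 c, (μ {x | x ∈ E ∧ t < c - f x} + μ {x | x ∈ E ∧ c - t ≤ f x}) :=
        lintegral_mono hcover
    _ = (∫⁻ t in Ioo 0 c, μ {x | x ∈ E ∧ t < c - f x}) +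
          ∫⁻ t in Ioo 0 c, μ {x | x ∈ E ∧ t < f x} := by
        rw [lintegral_add_left (antitone_measure_lt μ _ E).measurable, hreflect,
          setLIntegral_congr_fun_ae measurableSet_Ioo
            ((measure_le_ae_eq_measure_lt μ f E).mono fun _ ht _ => ht)]
    _ ≤ choquetIntegral μ (fun x => c - f x) E + choquetIntegral μ f E :=
        add_le_add (lintegral_mono_set Ioo_subset_Ioi_self) (lintegral_mono_set Ioo_subset_Ioi_self)

theorem ofReal_add_le_choquetIntegral_const_add (hf : ∀ x ∈ E, 0 ≤ f x) (hE : μ E ≠ ⊤)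
    (hI : choquetIntegral μ f E ≠ ⊤) (c : ℝ) :
    ENNReal.ofReal (c * (μ E).toReal + (choquetIntegral μ f E).toReal) ≤
      choquetIntegral μ (fun x => c + f x) E := by
  rcases le_total 0 c with hc | hc
  · rw [choquetIntegral_const_add_of_nonneg μ hc hf,
      ENNReal.ofReal_add (by positivity) (by positivity), ENNReal.ofReal_mul hc,
      ENNReal.ofReal_toReal hE, ENNReal.ofReal_toReal hI]
  · have hle := choquetIntegral_const_add_le μ (fun x => c + f x) E (neg_nonneg.2 hc)
    simp only [neg_add_cancel_left] at hle
    rw [show c * (μ E).toReal + (choquetIntegral μ f E).toReal =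
        (choquetIntegral μ f E).toReal - -c * (μ E).toReal by ring,
      ENNReal.ofReal_sub _ (mul_nonneg (neg_nonneg.2 hc) ENNReal.toReal_nonneg),
      ENNReal.ofReal_mul (neg_nonneg.2 hc), ENNReal.ofReal_toReal hE, ENNReal.ofReal_toReal hI]
    exact tsub_le_iff_left.2 hle

theorem ofReal_sub_le_choquetIntegral_const_sub (hE : μ E ≠ ⊤) (hI : choquetIntegral μ f E ≠ ⊤)
    (c : ℝ) :
    ENNReal.ofReal (c * (μ E).toReal - (choquetIntegral μ f E).toReal) ≤
      choquetIntegral μ (fun x => c - f x) E := by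
  rw [ENNReal.ofReal_sub _ ENNReal.toReal_nonneg, ENNReal.ofReal_mul' ENNReal.toReal_nonneg,
    ENNReal.ofReal_toReal hE, ENNReal.ofReal_toReal hI]
  exact tsub_le_iff_right.2 (ofReal_mul_measure_le_choquetIntegral_const_sub_add μ f E c)

theorem ofReal_add_mul_le_choquetIntegral_const_add_mul (hf : ∀ x ∈ E, 0 ≤ f x) (hE : μ E ≠ ⊤)
    (hI : choquetIntegral μ f E ≠ ⊤) (c l : ℝ) :
    ENNReal.ofReal (c * (μ E).toReal + l * (choquetIntegral μ f E).toReal) ≤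
      choquetIntegral μ (fun x => c + l * f x) E := by
  have hscale {k : ℝ} (hk : 0 ≤ k) : choquetIntegral μ (fun x => k * f x) E ≠ ⊤ := by
    rw [choquetIntegral_const_mul μ f E hk]
    exact ENNReal.mul_ne_top ENNReal.ofReal_ne_top hI
  rcases le_total 0 l with hl | hl
  · have h := ofReal_add_le_choquetIntegral_const_add (fun x hx => mul_nonneg hl (hf x hx)) hE
      (hscale hl) c
    rwa [choquetIntegral_const_mul μ f E hl, ENNReal.toReal_mul, ENNReal.toReal_ofReal hl] at h
  · have hl' : 0 ≤ -l := neg_nonneg.2 hl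
    have h := ofReal_sub_le_choquetIntegral_const_sub hE (hscale hl') c
    rw [choquetIntegral_const_mul μ f E hl', ENNReal.toReal_mul, ENNReal.toReal_ofReal hl'] at h
    simpa only [neg_mul, sub_neg_eq_add] using h

theorem ofReal_exp_mul_le_choquetIntegral_exp_mul (hf : ∀ x ∈ E, 0 ≤ f x) (hE : μ E ≠ ⊤)
    (hI : choquetIntegral μ f E ≠ ⊤) (l s : ℝ) :
    ENNReal.ofReal
        (Real.exp s * ((1 - s) * (μ E).toReal + l * (choquetIntegral μ f E).toReal)) ≤
      choquetIntegral μ (fun x => Real.exp (l * f x)) E := by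
  -- the affine function on the left is the tangent line of `exp` at `s`
  have htangent (y : ℝ) : Real.exp s * (1 - s) + Real.exp s * l * y ≤ Real.exp (l * y) :=
    calc Real.exp s * (1 - s) + Real.exp s * l * y
        = Real.exp s * (l * y - s + 1) := by ring
      _ ≤ Real.exp s * Real.exp (l * y - s) := by
          gcongr
          exact Real.add_one_le_exp _
      _ = Real.exp (l * y) := by rw [← Real.exp_add, add_sub_cancel]
  rw [mul_add, ← mul_assoc, ← mul_assoc]
  exact (ofReal_add_mul_le_choquetIntegral_const_add_mul hf hE hI _ _).trans
    (choquetIntegral_mono Subset.rfl fun x _ => htangent (f x))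

theorem choquetIntegral_ne_top_of_exp_mul (ha : 0 < a)
    (h : choquetIntegral μ (fun x => Real.exp (a * f x)) E ≠ ⊤) : choquetIntegral μ f E ≠ ⊤ := by
  have hle := choquetIntegral_mono (μ := μ) (Subset.refl E) fun x _ =>
    (lt_add_one (a * f x)).le.trans (Real.add_one_le_exp (a * f x))
  rw [choquetIntegral_const_mul μ f E ha.le] at hle
  exact (ENNReal.lt_top_of_mul_ne_top_right (ne_top_of_le_ne_top h hle)
    (ENNReal.ofReal_pos.2 ha).ne').ne

/-- The average of `f` over `E` against an outer measure `μ`, the positive and the negative part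
of `f` being integrated separately; `avgQ` is the case of the dyadic Hausdorff content. -/
def choquetAverage (μ : OuterMeasure α) (f : α → ℝ) (E : Set α) : ℝ :=
  ((choquetIntegral μ f (E ∩ {x | 0 ≤ f x})).toReal -
      (choquetIntegral μ (fun x => -f x) (E ∩ {x | f x < 0})).toReal) /
    ((μ (E ∩ {x | 0 ≤ f x})).toReal + (μ (E ∩ {x | f x < 0})).toReal)

theorem measure_le_measure_nonneg_add_measure_neg (μ : OuterMeasure α) (f : α → ℝ) (E : Set α) :
    μ E ≤ μ (E ∩ {x | 0 ≤ f x}) + μ (E ∩ {x | f x < 0}) := by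
  refine (measure_mono fun x hx => ?_).trans (measure_union_le _ _)
  exact (le_or_gt 0 (f x)).imp (⟨hx, ·⟩) (⟨hx, ·⟩)

theorem ofReal_exp_mul_choquetAverage_mul_measure_le (hE : μ E ≠ ⊤)
    (hpos : choquetIntegral μ f (E ∩ {x | 0 ≤ f x}) ≠ ⊤)
    (hneg : choquetIntegral μ (fun x => -f x) (E ∩ {x | f x < 0}) ≠ ⊤) (l : ℝ) :
    ENNReal.ofReal (Real.exp (l * choquetAverage μ f E)) * μ E ≤
      2 * choquetIntegral μ (fun x => Real.exp (l * f x)) E := by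
  rcases eq_or_ne (μ E) 0 with h0 | h0
  · simp [h0]
  have hsplit := measure_le_measure_nonneg_add_measure_neg μ f E
  have havg : choquetAverage μ f E = _ / _ := rfl
  set A := choquetAverage μ f E
  set P := E ∩ {x | 0 ≤ f x}
  set N := E ∩ {x | f x < 0}
  have hP : μ P ≠ ⊤ := ne_top_of_le_ne_top hE (measure_mono inter_subset_left)
  have hN : μ N ≠ ⊤ := ne_top_of_le_ne_top hE (measure_mono inter_subset_left)
  have hmass : 0 < (μ P).toReal + (μ N).toReal := by
    rw [← ENNReal.toReal_add hP hN]
    exact ENNReal.toReal_pos ((pos_iff_ne_zero.2 h0).trans_le hsplit).ne'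
      (ENNReal.add_ne_top.2 ⟨hP, hN⟩)
  rw [eq_div_iff hmass.ne'] at havg
  have hPle := (ofReal_exp_mul_le_choquetIntegral_exp_mul (fun x hx => hx.2)
    hP hpos l (l * A)).trans (choquetIntegral_mono inter_subset_left fun _ _ => le_rfl)
  have hNle := (ofReal_exp_mul_le_choquetIntegral_exp_mul (fun x hx => neg_nonneg.2 (le_of_lt hx.2))
    hN hneg (-l) (l * A)).trans (choquetIntegral_mono inter_subset_left fun _ _ => le_rfl)
  simp only [neg_mul_neg] at hNle
  calc ENNReal.ofReal (Real.exp (l * A)) * μ E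
      ≤ ENNReal.ofReal (Real.exp (l * A)) * (μ P + μ N) := by gcongr
    _ = ENNReal.ofReal (Real.exp (l * A) * ((μ P).toReal + (μ N).toReal)) := by
        rw [ENNReal.ofReal_mul (by positivity), ← ENNReal.toReal_add hP hN,
          ENNReal.ofReal_toReal (ENNReal.add_ne_top.2 ⟨hP, hN⟩)]
    _ = ENNReal.ofReal (_ + _) := by
        congr 1
        linear_combination Real.exp (l * A) * l * havg
    _ ≤ _ + _ := ENNReal.ofReal_add_le
    _ ≤ _ := (add_le_add hPle hNle).trans_eq (two_mul _).symm

theorem choquetIntegral_pos_neg_ne_top_of_exp_mul (hab : a * b < 0)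
    (hIa : choquetIntegral μ (fun x => Real.exp (a * f x)) E ≠ ⊤)
    (hIb : choquetIntegral μ (fun x => Real.exp (b * f x)) E ≠ ⊤) :
    choquetIntegral μ f (E ∩ {x | 0 ≤ f x}) ≠ ⊤ ∧
      choquetIntegral μ (fun x => -f x) (E ∩ {x | f x < 0}) ≠ ⊤ := by
  wlog ha : 0 < a generalizing a b
  · have hb : 0 < b := pos_of_mul_neg_right hab (not_lt.1 ha)
    exact this (mul_comm a b ▸ hab) hIb hIa hb
  have hb : 0 < -b := neg_pos.2 (neg_of_mul_neg_right hab ha.le)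
  refine ⟨ne_top_of_le_ne_top (choquetIntegral_ne_top_of_exp_mul ha hIa)
    (choquetIntegral_mono inter_subset_left fun _ _ => le_rfl), ?_⟩
  have hneg : choquetIntegral μ (fun x => -f x) E ≠ ⊤ :=
    choquetIntegral_ne_top_of_exp_mul hb (by simpa only [neg_mul_neg] using hIb)
  exact ne_top_of_le_ne_top hneg (choquetIntegral_mono inter_subset_left fun _ _ => le_rfl)

theorem choquetIntegral_exp_mul_sub_choquetAverage_div_le (hE : μ E ≠ ⊤) (ha : a ≠ 0)
    (hs : 0 < s) (hab : a + s * b = 0) :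
    choquetIntegral μ (fun x => Real.exp (a * (f x - choquetAverage μ f E))) E / μ E ≤
      (2 * (choquetIntegral μ (fun x => Real.exp (b * f x)) E / μ E)) ^ s *
        (choquetIntegral μ (fun x => Real.exp (a * f x)) E / μ E) := by
  rcases eq_or_ne (μ E) 0 with h0 | h0
  · simp [(choquetIntegral_eq_zero_iff_of_pos fun _ _ => Real.exp_pos _).2 h0]
  have hexp_ne_zero (k : ℝ) : choquetIntegral μ (fun x => Real.exp (k * f x)) E / μ E ≠ 0 :=
    ENNReal.div_ne_zero.2
      ⟨mt (choquetIntegral_eq_zero_iff_of_pos fun _ _ => Real.exp_pos _).1 h0, hE⟩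
  by_cases hIa : choquetIntegral μ (fun x => Real.exp (a * f x)) E = ⊤
  · rw [hIa, ENNReal.top_div_of_ne_top hE, ENNReal.mul_top]
    · exact le_top
    · simp [hexp_ne_zero b, hs.le]
  by_cases hIb : choquetIntegral μ (fun x => Real.exp (b * f x)) E = ⊤
  · rw [hIb, ENNReal.top_div_of_ne_top hE, ENNReal.mul_top two_ne_zero, ENNReal.top_rpow_of_pos hs,
      ENNReal.top_mul (hexp_ne_zero a)]
    exact le_top
  have hb : b ≠ 0 := by
    rintro rfl
    exact ha (by simpa using hab)
  have hab_neg : a * b < 0 :=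
    calc a * b = -(s * b ^ 2) := by linear_combination b * hab
      _ < 0 := neg_neg_of_pos (by positivity)
  obtain ⟨hpos, hneg⟩ := choquetIntegral_pos_neg_ne_top_of_exp_mul hab_neg hIa hIb
  have hjensen := ofReal_exp_mul_choquetAverage_mul_measure_le hE hpos hneg b
  rw [← ENNReal.le_div_iff_mul_le (Or.inl h0) (Or.inl hE), mul_div_assoc] at hjensen
  set A := choquetAverage μ f E
  have hfactor : (fun x => Real.exp (a * (f x - A))) =
      fun x => Real.exp (b * A) ^ s * Real.exp (a * f x) := by
    funext x
    rw [← Real.exp_mul, ← Real.exp_add]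
    congr 1
    linear_combination -A * hab
  rw [hfactor, choquetIntegral_const_mul μ _ E (by positivity), mul_div_assoc,
    ← ENNReal.ofReal_rpow_of_pos (Real.exp_pos _)]
  gcongr

end Choquet

section DyadicContent

variable {n : ℕ} {δ : ℝ} {E F : Set (Fin n → ℝ)} {f : (Fin n → ℝ) → ℝ} {a b s p : ℝ}

theorem Cube.exists_isDyadic_rpow_lt (n : ℕ) (hδ : 0 < δ) {ε : ℝ≥0∞} (hε : 0 < ε) :
    ∃ R : Cube n, R.IsDyadic ∧ ENNReal.ofReal (R.side ^ δ) < ε := by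
  have hpow : Tendsto (fun k : ℕ => ((2 : ℝ)⁻¹ ^ k) ^ δ) atTop (𝓝 0) := by
    simpa only [Real.zero_rpow hδ.ne'] using
      (tendsto_pow_atTop_nhds_zero_of_lt_one (by norm_num) (by norm_num)).rpow_const
        (Or.inr hδ.le)
  have hpow' : Tendsto (fun k : ℕ => ENNReal.ofReal (((2 : ℝ)⁻¹ ^ k) ^ δ)) atTop (𝓝 0) := by
    simpa only [ENNReal.ofReal_zero] using ENNReal.tendsto_ofReal hpow
  obtain ⟨k, hk⟩ := (hpow'.eventually_lt_const hε).exists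
  exact ⟨⟨0, 2⁻¹ ^ k, by positivity⟩, ⟨-k, 0, by simp, by simp⟩, hk⟩

theorem Cube.exists_isDyadic_cover (Q : Cube n) : ∃ R : (Fin n → Bool) → Cube n,
    (∀ b, (R b).IsDyadic) ∧ (∀ b, (R b).side ≤ 2 * Q.side) ∧ Q.toSet ⊆ ⋃ b, (R b).toSet := by
  obtain ⟨k, hk_le, hlt_k⟩ := exists_mem_Ico_zpow Q.side_pos (one_lt_two : (1 : ℝ) < 2)
  set S : ℝ := 2 ^ (k + 1) with hS
  have hS0 : 0 < S := by positivity
  have hS_le : S ≤ 2 * Q.side := by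
    rw [hS, zpow_add_one₀ two_ne_zero, mul_comm]
    gcongr
  refine ⟨fun b => ⟨fun i => ((⌊Q.corner i / S⌋ + if b i then 1 else 0 : ℤ) : ℝ) * S, S, hS0⟩,
    fun b => ⟨k + 1, fun i => ⌊Q.corner i / S⌋ + if b i then 1 else 0, rfl, fun _ => rfl⟩,
    fun _ => hS_le, fun x hx => ?_⟩
  refine mem_iUnion.2 ⟨fun i => decide ((⌊Q.corner i / S⌋ + 1 : ℝ) * S ≤ x i), fun i => ?_⟩
  obtain ⟨hcorner_le, hlt_corner⟩ := hx i
  have hfloor_le : (⌊Q.corner i / S⌋ : ℝ) * S ≤ Q.corner i :=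
    (le_div_iff₀ hS0).1 (Int.floor_le _)
  have hlt_floor : Q.corner i < (⌊Q.corner i / S⌋ + 1 : ℝ) * S :=
    (div_lt_iff₀ hS0).1 (Int.lt_floor_add_one _)
  by_cases hright : (⌊Q.corner i / S⌋ + 1 : ℝ) * S ≤ x i
  · simp only [hright, decide_true, if_true, Int.cast_add, Int.cast_one, true_and]
    linarith
  · simp only [hright, decide_false, Bool.false_eq_true, if_false, add_zero]
    constructor <;> linarith

theorem dContent_mono (hEF : E ⊆ F) : dContent n δ E ≤ dContent n δ F :=
  le_iInf₂ fun Qs hQs => iInf₂_le Qs ⟨hQs.1, hEF.trans hQs.2⟩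

theorem exists_dyadic_cover_of_dContent_lt {c : ℝ≥0∞} (h : dContent n δ E < c) :
    ∃ Qs : ℕ → Cube n, (∀ i, (Qs i).IsDyadic) ∧ E ⊆ ⋃ i, (Qs i).toSet ∧
      ∑' i, ENNReal.ofReal ((Qs i).side ^ δ) < c := by
  simpa only [dContent, iInf_lt_iff, exists_prop, and_assoc] using h

theorem dContent_toSet_le_of_isDyadic (hδ : 0 < δ) {R : Cube n} (hR : R.IsDyadic) :
    dContent n δ R.toSet ≤ ENNReal.ofReal (R.side ^ δ) := by
  refine ENNReal.le_of_forall_pos_le_add fun ε hε _ => ?_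
  obtain ⟨η, hη, hsum⟩ := ENNReal.exists_pos_sum_of_countable' (ENNReal.coe_pos.2 hε).ne' ℕ
  choose T hT hTη using fun i => Cube.exists_isDyadic_rpow_lt n hδ (hη i)
  let Qs : ℕ → Cube n := fun i => Nat.casesOn i R T
  have hQs : (∀ i, (Qs i).IsDyadic) ∧ R.toSet ⊆ ⋃ i, (Qs i).toSet :=
    ⟨fun i => Nat.casesOn i hR hT, subset_iUnion (fun i => (Qs i).toSet) 0⟩
  calc dContent n δ R.toSet
      ≤ ∑' i, ENNReal.ofReal ((Qs i).side ^ δ) := iInf₂_le Qs hQs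
    _ = ENNReal.ofReal (R.side ^ δ) + ∑' i, ENNReal.ofReal ((T i).side ^ δ) :=
        tsum_eq_zero_add' ENNReal.summable
    _ ≤ ENNReal.ofReal (R.side ^ δ) + ε := by
        gcongr
        exact (ENNReal.tsum_le_tsum fun i => (hTη i).le).trans hsum.le

theorem dContent_empty (n : ℕ) (hδ : 0 < δ) : dContent n δ ∅ = 0 := by
  refine nonpos_iff_eq_zero.1 (le_of_forall_gt fun ε hε => ?_)
  obtain ⟨R, hR, hlt⟩ := Cube.exists_isDyadic_rpow_lt n hδ hε
  exact ((dContent_mono (empty_subset _)).trans (dContent_toSet_le_of_isDyadic hδ hR)).trans_lt hlt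

theorem dContent_iUnion_le (s : ℕ → Set (Fin n → ℝ)) :
    dContent n δ (⋃ i, s i) ≤ ∑' i, dContent n δ (s i) := by
  refine ENNReal.le_of_forall_pos_le_add fun ε hε hfin => ?_
  obtain ⟨η, hη, hsum⟩ := ENNReal.exists_pos_sum_of_countable' (ENNReal.coe_pos.2 hε).ne' ℕ
  have hlt (i : ℕ) : dContent n δ (s i) < dContent n δ (s i) + η i :=
    ENNReal.lt_add_right (ne_top_of_le_ne_top hfin.ne (ENNReal.le_tsum i)) (hη i).ne'
  choose Qs hdyadic hcover hQs using fun i => exists_dyadic_cover_of_dContent_lt (hlt i)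
  have hunion : ⋃ i, s i ⊆ ⋃ k, (Qs (Nat.unpair k).1 (Nat.unpair k).2).toSet := by
    rw [iUnion_unpair fun i j => (Qs i j).toSet]
    exact iUnion_mono hcover
  calc dContent n δ (⋃ i, s i)
      ≤ ∑' k, ENNReal.ofReal ((Qs (Nat.unpair k).1 (Nat.unpair k).2).side ^ δ) :=
        iInf₂_le (fun k => Qs (Nat.unpair k).1 (Nat.unpair k).2) ⟨fun _ => hdyadic _ _, hunion⟩
    _ = ∑' i, ∑' j, ENNReal.ofReal ((Qs i j).side ^ δ) := by
        rw [← ENNReal.tsum_prod, ← Nat.pairEquiv.symm.tsum_eq]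
        rfl
    _ ≤ ∑' i, (dContent n δ (s i) + η i) := ENNReal.tsum_le_tsum fun i => (hQs i).le
    _ ≤ ∑' i, dContent n δ (s i) + ε := by
        rw [ENNReal.tsum_add]
        gcongr

/-- The dyadic Hausdorff content as an outer measure. Coverings are sequences of nonempty cubes,
so `∅` has content `0` only because there are dyadic cubes with arbitrarily small `side ^ δ`. -/
def dyadicOuterMeasure (n : ℕ) (hδ : 0 < δ) : OuterMeasure (Fin n → ℝ) where
  measureOf := dContent n δ
  empty := dContent_empty n hδ
  mono := dContent_mono
  iUnion_nat s _ := dContent_iUnion_le s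

/-- The constant in `dContent_le_hContent`: a cube of side `r` is covered by `2 ^ n` dyadic cubes
of side at most `2 * r`. -/
def dyadicFactor (n : ℕ) (δ : ℝ) : ℝ≥0 :=
  2 ^ n * 2 ^ δ

theorem dyadicFactor_pos (n : ℕ) (δ : ℝ) : 0 < dyadicFactor n δ := by
  unfold dyadicFactor
  positivity

theorem hContent_le_dContent (n : ℕ) (δ : ℝ) (E : Set (Fin n → ℝ)) :
    hContent n δ E ≤ dContent n δ E :=
  le_iInf₂ fun Qs hQs => iInf₂_le Qs hQs.2

theorem dContent_toSet_le (hδ : 0 < δ) (Q : Cube n) :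
    dContent n δ Q.toSet ≤ dyadicFactor n δ * ENNReal.ofReal (Q.side ^ δ) := by
  obtain ⟨R, hR, hside, hcover⟩ := Q.exists_isDyadic_cover
  have hrpow (b : Fin n → Bool) :
      ENNReal.ofReal ((R b).side ^ δ) ≤ 2 ^ δ * ENNReal.ofReal (Q.side ^ δ) := by
    calc ENNReal.ofReal ((R b).side ^ δ) ≤ ENNReal.ofReal ((2 * Q.side) ^ δ) := by
          gcongr
          exacts [(R b).side_pos.le, hside b]
      _ = 2 ^ δ * ENNReal.ofReal (Q.side ^ δ) := by
          rw [Real.mul_rpow zero_le_two Q.side_pos.le, ENNReal.ofReal_mul (by positivity),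
            ← ENNReal.ofReal_rpow_of_pos two_pos, ENNReal.ofReal_ofNat]
  calc dContent n δ Q.toSet
      ≤ dyadicOuterMeasure n hδ (⋃ b, (R b).toSet) := dContent_mono hcover
    _ ≤ ∑ b, dContent n δ (R b).toSet := measure_iUnion_fintype_le (dyadicOuterMeasure n hδ) _
    _ ≤ ∑ _ : Fin n → Bool, 2 ^ δ * ENNReal.ofReal (Q.side ^ δ) :=
        Finset.sum_le_sum fun b _ => (dContent_toSet_le_of_isDyadic hδ (hR b)).trans (hrpow b)
    _ = dyadicFactor n δ * ENNReal.ofReal (Q.side ^ δ) := by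
        simp [dyadicFactor, mul_assoc, ENNReal.coe_rpow_of_ne_zero]

theorem dContent_toSet_ne_top (hδ : 0 < δ) (Q : Cube n) : dContent n δ Q.toSet ≠ ⊤ :=
  ne_top_of_le_ne_top (ENNReal.mul_ne_top ENNReal.coe_ne_top ENNReal.ofReal_ne_top)
    (dContent_toSet_le hδ Q)

theorem dContent_le_hContent (hδ : 0 < δ) (E : Set (Fin n → ℝ)) :
    dContent n δ E ≤ dyadicFactor n δ * hContent n δ E := by
  have hfactor : (dyadicFactor n δ : ℝ≥0∞) ≠ 0 := ENNReal.coe_ne_zero.2 (dyadicFactor_pos n δ).ne'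
  simp only [hContent, ENNReal.mul_iInf_of_ne hfactor ENNReal.coe_ne_top, ← ENNReal.tsum_mul_left]
  refine le_iInf₂ fun Qs hQs => ?_
  calc dContent n δ E
      ≤ dyadicOuterMeasure n hδ (⋃ i, (Qs i).toSet) := dContent_mono hQs
    _ ≤ ∑' i, dContent n δ (Qs i).toSet := dContent_iUnion_le _
    _ ≤ ∑' i, dyadicFactor n δ * ENNReal.ofReal ((Qs i).side ^ δ) :=
        ENNReal.tsum_le_tsum fun i => dContent_toSet_le hδ (Qs i)

theorem integD_le_integH (hδ : 0 < δ) (f : (Fin n → ℝ) → ℝ) (E : Set (Fin n → ℝ)) :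
    integD n δ f E ≤ dyadicFactor n δ * integH n δ f E := by
  rw [integD, integH, ← lintegral_const_mul' _ _ ENNReal.coe_ne_top]
  exact lintegral_mono fun _ => dContent_le_hContent hδ _

theorem integD_div_le_integH_div (hδ : 0 < δ) (f : (Fin n → ℝ) → ℝ) (E : Set (Fin n → ℝ)) :
    integD n δ f E / dContent n δ E ≤
      dyadicFactor n δ * (integH n δ f E / hContent n δ E) := by
  rw [← mul_div_assoc]
  exact ENNReal.div_le_div (integD_le_integH hδ f E) (hContent_le_dContent n δ E)

theorem integD_exp_mul_log_sub_avgQ_div_le (hδ : 0 < δ) (ha : a ≠ 0) (hs : 0 < s)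
    (hab : a + s * b = 0) (hf : ∀ x, 0 < f x) (Q : Cube n) :
    integD n δ
        (fun x => Real.exp (a * (Real.log (f x) - avgQ n δ (fun y => Real.log (f y)) Q)))
        Q.toSet / dContent n δ Q.toSet ≤
      ((2 * dyadicFactor n δ) ^ s * dyadicFactor n δ : ℝ≥0) *
        ((integH n δ (fun x => f x ^ b) Q.toSet / hContent n δ Q.toSet) ^ s *
          (integH n δ (fun x => f x ^ a) Q.toSet / hContent n δ Q.toSet)) := by
  have hexp_log (c : ℝ) : (fun x => Real.exp (c * Real.log (f x))) = fun x => f x ^ c :=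
    funext fun x => by rw [Real.rpow_def_of_pos (hf x), mul_comm]
  have hcompare (c : ℝ) := integD_div_le_integH_div hδ (fun x => f x ^ c) Q.toSet
  have hdyadic := choquetIntegral_exp_mul_sub_choquetAverage_div_le
    (μ := dyadicOuterMeasure n hδ) (f := fun x => Real.log (f x)) (dContent_toSet_ne_top hδ Q)
    ha hs hab
  rw [hexp_log a, hexp_log b] at hdyadic
  refine hdyadic.trans ((mul_le_mul' (ENNReal.rpow_le_rpow (mul_le_mul_right (hcompare b) 2) hs.le)
    (hcompare a)).trans_eq ?_)
  rw [← mul_assoc (2 : ℝ≥0∞), ENNReal.mul_rpow_of_nonneg _ _ hs.le, ENNReal.coe_mul,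
    ENNReal.coe_rpow_of_nonneg _ hs.le, ENNReal.coe_mul, ENNReal.coe_ofNat]
  ring

theorem iSup_integD_exp_log_sub_avgQ_div_le (hδ : 0 < δ) (hp : 1 < p) (hf : ∀ x, 0 < f x) :
    (⨆ Q : Cube n,
        integD n δ (fun x => Real.exp (Real.log (f x) - avgQ n δ (fun y => Real.log (f y)) Q))
          Q.toSet / dContent n δ Q.toSet) ≤
      ((2 * dyadicFactor n δ) ^ (p - 1) * dyadicFactor n δ : ℝ≥0) * apConst n δ p f := by
  refine iSup_le fun Q => ?_
  have hp' : 0 < p - 1 := sub_pos.2 hp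
  have hQ := integD_exp_mul_log_sub_avgQ_div_le (a := 1) (b := -(1 / (p - 1))) hδ one_ne_zero hp'
    (by field_simp; ring) hf Q
  simp only [one_mul, Real.rpow_one] at hQ
  refine hQ.trans ?_
  gcongr
  rw [mul_comm]
  exact le_iSup_of_le Q le_rfl

theorem iSup_integD_exp_neg_mul_log_sub_avgQ_div_le (hδ : 0 < δ) (hp : 1 < p)
    (hf : ∀ x, 0 < f x) :
    (⨆ Q : Cube n,
        integD n δ
            (fun x => Real.exp (-(1 / (p - 1)) *
              (Real.log (f x) - avgQ n δ (fun y => Real.log (f y)) Q)))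
            Q.toSet / dContent n δ Q.toSet) ≤
      ((2 * dyadicFactor n δ) ^ (1 / (p - 1)) * dyadicFactor n δ : ℝ≥0) *
        apConst n δ p f ^ (1 / (p - 1)) := by
  refine iSup_le fun Q => ?_
  have hp' : 0 < p - 1 := sub_pos.2 hp
  have hq : 0 < 1 / (p - 1) := one_div_pos.2 hp'
  have hQ := integD_exp_mul_log_sub_avgQ_div_le (a := -(1 / (p - 1))) (b := 1) hδ
    (neg_ne_zero.2 hq.ne') hq (by ring) hf Q
  simp only [Real.rpow_one] at hQ
  refine hQ.trans ?_
  gcongr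
  have hcancel (y : ℝ≥0∞) : y = (y ^ (p - 1)) ^ (1 / (p - 1)) := by
    rw [← ENNReal.rpow_mul, mul_one_div_cancel hp'.ne', ENNReal.rpow_one]
  rw [hcancel (integH n δ (fun x => f x ^ (-(1 / (p - 1)))) Q.toSet / hContent n δ Q.toSet),
    ← ENNReal.mul_rpow_of_nonneg _ _ hq.le]
  exact ENNReal.rpow_le_rpow (le_iSup_of_le Q le_rfl) hq.le

end DyadicContent

theorem stmt13_general (n : ℕ) {δ p : ℝ} (hδ : 0 < δ) (_hδn : δ ≤ n) (hp : 1 < p) :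
    ∃ C : ℝ, 0 < C ∧ ∀ f : (Fin n → ℝ) → ℝ, (∀ x, 0 < f x) →
      (⨆ Q : Cube n,
          integD n δ
              (fun x => Real.exp (Real.log (f x) - avgQ n δ (fun y => Real.log (f y)) Q))
              Q.toSet /
            dContent n δ Q.toSet) ≤
          ENNReal.ofReal C * apConst n δ p f ∧
      (⨆ Q : Cube n,
          integD n δ
              (fun x => Real.exp (-(1 / (p - 1)) *
                (Real.log (f x) - avgQ n δ (fun y => Real.log (f y)) Q)))
              Q.toSet /
            dContent n δ Q.toSet) ≤
          ENNReal.ofReal C * apConst n δ p f ^ (1 / (p - 1)) := by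
  have hK := dyadicFactor_pos n δ
  let C (s : ℝ) : ℝ≥0 := (2 * dyadicFactor n δ) ^ s * dyadicFactor n δ
  have hC (s : ℝ) : 0 < C s := by positivity
  refine ⟨(C (p - 1) + C (1 / (p - 1)) : ℝ≥0), NNReal.coe_pos.2 (add_pos (hC _) (hC _)),
    fun f hf => ?_⟩
  rw [ENNReal.ofReal_coe_nnreal]
  constructor
  · refine (iSup_integD_exp_log_sub_avgQ_div_le hδ hp hf).trans ?_
    gcongr
    exact le_add_of_nonneg_right (hC _).le
  · refine (iSup_integD_exp_neg_mul_log_sub_avgQ_div_le hδ hp hf).trans ?_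
    gcongr
    exact le_add_of_nonneg_left (hC _).le

/-- exponential integrability of `ln f − (ln f)_{Q,δ}` for `f ∈ A_{p,δ}`. -/
theorem stmt13 (n : ℕ) (hn : 1 ≤ n) (δ p : ℝ) (hδ0 : 0 < δ) (hδn : δ ≤ n) (hp : 1 < p) :
    ∃ C : ℝ, 0 < C ∧ ∀ f : (Fin n → ℝ) → ℝ, (∀ x, 0 < f x) → MemAp n δ p f →
      MemL1loc n δ (fun x => Real.log (f x)) →
      (⨆ Q : Cube n,
          integD n δ
              (fun x => Real.exp (Real.log (f x) - avgQ n δ (fun y => Real.log (f y)) Q))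
              Q.toSet /
            dContent n δ Q.toSet) ≤
          ENNReal.ofReal C * apConst n δ p f ∧
      (⨆ Q : Cube n,
          integD n δ
              (fun x => Real.exp (-(1 / (p - 1)) *
                (Real.log (f x) - avgQ n δ (fun y => Real.log (f y)) Q)))
              Q.toSet /
            dContent n δ Q.toSet) ≤
          ENNReal.ofReal C * apConst n δ p f ^ (1 / (p - 1)) := by
  obtain ⟨C, hC, hbound⟩ := stmt13_general n hδ0 hδn hp
  exact ⟨C, hC, fun f hf _ _ => hbound f hf⟩
end
end

section
/- Let n ≥ 1 be an integer, δ ∈ (0, n] and α ∈ (0, 1). There exists a constant c > 0, depending only on n, δ and α, such that for every f ∈ L¹_loc(ℝⁿ, ℋ^δ_∞) with M_{ℋ^δ_∞} f(x) < ∞ for ℋ^δ_∞-a.e. x ∈ ℝⁿ, one has for every cube Q₀ of ℝⁿ: (1/ℋ^δ_∞(Q₀)) ∫_{Q₀} (M_{ℋ^δ_∞} f)^α dℋ^δ_∞ ≤ c · inf_{x ∈ Q₀} (M_{ℋ^δ_∞} f(x))^α; consequently M_{ℋ^δ_∞}((M_{ℋ^δ_∞} f)^α)(x) ≤ c · (M_{ℋ^δ_∞}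 f(x))^α for every x ∈ ℝⁿ. -/
open scoped ENNReal
open Set MeasureTheory

noncomputable section

/-!
The maximal operator is of weak type `(1,1)` although the content is not additive: a cube on which
the average of `|f|` exceeds `2a` satisfies `ℋ(Q) ≤ ∑ₖ 2ᵏ ℋ(Q ∩ {a 2ᵏ < |f|})`. Cover each level
set almost optimally by cubes. If `Q` contains a point outside the triples of the covering cubes, it
is larger than each covering cube it meets, so moving the mass `ℓ(P)ᵟ` of every covering cube `P` to
one of its corners bounds the right-hand side by the measure of a slightly larger ball, and Vitali's
covering theorem applies.

For `x, y ∈ Q₀` the cubes around `x` that are larger than `Q₀` contribute at most `3ᵟ M f(y)` to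
`M f(x)`, and the smaller ones lie in `3 Q₀`. Applied to `f` restricted to `3 Q₀`, the weak type
inequality therefore bounds the decay of the level sets of `M f` in `Q₀` in terms of `M f(y)`, and
Kolmogorov's inequality turns this bound into one for the integral of `(M f)^α` over `Q₀`.
-/

variable {n : ℕ} {δ : ℝ}

theorem Cube.volume_toSet (Q : Cube n) : volume Q.toSet = ENNReal.ofReal Q.side ^ n := by
  have h : Q.toSet = univ.pi fun i => Ico (Q.corner i) (Q.corner i + Q.side) := by
    ext x
    simp only [Cube.toSet, mem_ofPred_eq, mem_univ_pi, mem_Ico]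
  simp only [h, Real.volume_pi_Ico, add_sub_cancel_left, Finset.prod_const, Finset.card_univ,
    Fintype.card_fin]

theorem Cube.toSet_subset_dilate_three {P Q : Cube n} (hPQ : (P.toSet ∩ Q.toSet).Nonempty)
    (hside : Q.side ≤ P.side) : Q.toSet ⊆ (P.dilate 3 three_pos).toSet := by
  obtain ⟨z, hzP, hzQ⟩ := hPQ
  intro x hx i
  have := hzP i
  have := hzQ i
  have := hx i
  simp only [Cube.dilate]
  constructor <;> linarith

theorem Cube.toSet_subset_dilate_three_self (Q : Cube n) :
    Q.toSet ⊆ (Q.dilate 3 three_pos).toSet := fun _ hx =>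
  Cube.toSet_subset_dilate_three ⟨_, hx, hx⟩ le_rfl hx

theorem Cube.corner_mem_closedBall {P Q : Cube n} (hPQ : (P.toSet ∩ Q.toSet).Nonempty)
    (hside : P.side ≤ Q.side) {x : Fin n → ℝ} (hx : x ∈ Q.toSet) :
    P.corner ∈ Metric.closedBall x (2 * Q.side) := by
  obtain ⟨z, hzP, hzQ⟩ := hPQ
  have hQ := Q.side_pos
  rw [Metric.mem_closedBall, dist_pi_le_iff (by positivity)]
  intro i
  have := hzP i
  have := hzQ i
  have := hx i
  rw [Real.dist_eq, abs_le]
  constructor <;> linarith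

/-! ### Hausdorff content -/

theorem hContent_le_tsum {ι : Type*} [Denumerable ι] {E : Set (Fin n → ℝ)} {Q : ι → Cube n}
    (hE : E ⊆ ⋃ i, (Q i).toSet) : hContent n δ E ≤ ∑' i, ENNReal.ofReal (Q i).side ^ δ := by
  have hcover : E ⊆ ⋃ k, (Q ((Denumerable.eqv ι).symm k)).toSet := by
    rwa [(Denumerable.eqv ι).symm.surjective.iUnion_comp fun i => (Q i).toSet]
  calc hContent n δ E
      ≤ ∑' k, ENNReal.ofReal ((Q ((Denumerable.eqv ι).symm k)).side ^ δ) :=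
        iInf₂_le (fun k => Q ((Denumerable.eqv ι).symm k)) hcover
    _ = ∑' i, ENNReal.ofReal ((Q i).side ^ δ) :=
        (Denumerable.eqv ι).symm.tsum_eq fun i => ENNReal.ofReal ((Q i).side ^ δ)
    _ = ∑' i, ENNReal.ofReal (Q i).side ^ δ := by
        simp only [ENNReal.ofReal_rpow_of_pos (Cube.side_pos _)]

theorem exists_cubes_of_hContent_lt {E : Set (Fin n → ℝ)} {b : ℝ≥0∞} (hb : hContent n δ E < b) :
    ∃ Q : ℕ → Cube n, E ⊆ ⋃ i, (Q i).toSet ∧ ∑' i, ENNReal.ofReal (Q i).side ^ δ < b := by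
  simp only [hContent, iInf_lt_iff] at hb
  obtain ⟨Q, hE, hQ⟩ := hb
  exact ⟨Q, hE, by simpa only [ENNReal.ofReal_rpow_of_pos (Cube.side_pos _)] using hQ⟩

theorem hContent_mono {E F : Set (Fin n → ℝ)} (h : E ⊆ F) : hContent n δ E ≤ hContent n δ F :=
  le_iInf₂ fun Q hQ => iInf₂_le Q (h.trans hQ)

theorem exists_cubes_tsum_lt (hδ : 0 < δ) {ε : ℝ≥0∞} (hε : ε ≠ 0) :
    ∃ Q : ℕ → Cube n, ∑' i, ENNReal.ofReal (Q i).side ^ δ < ε := by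
  obtain ⟨e, he, hsum⟩ := ENNReal.exists_pos_sum_of_countable hε ℕ
  have hside (i : ℕ) : ENNReal.ofReal ((e i : ℝ) ^ δ⁻¹) ^ δ = e i := by
    rw [← ENNReal.ofReal_rpow_of_pos (NNReal.coe_pos.2 (he i)), ENNReal.rpow_inv_rpow hδ.ne',
      ENNReal.ofReal_coe_nnreal]
  exact ⟨fun i => ⟨0, (e i : ℝ) ^ δ⁻¹, Real.rpow_pos_of_pos (he i) _⟩, by simpa only [hside]⟩

theorem hContent_empty (hδ : 0 < δ) : hContent n δ ∅ = 0 := by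
  by_contra hne
  obtain ⟨Q, hQ⟩ := exists_cubes_tsum_lt (n := n) hδ hne
  exact hQ.not_ge (hContent_le_tsum (empty_subset _))

theorem exists_cubes_of_tsum_hContent_lt {c : ℕ → ℝ≥0∞} (hc0 : ∀ k, c k ≠ 0)
    (hc : ∀ k, c k ≠ ⊤) {E : ℕ → Set (Fin n → ℝ)} {S : ℝ≥0∞}
    (hS : ∑' k, c k * hContent n δ (E k) < S) :
    ∃ P : ℕ → ℕ → Cube n, (∀ k, E k ⊆ ⋃ i, (P k i).toSet) ∧
      ∑' k, c k * ∑' i, ENNReal.ofReal (P k i).side ^ δ < S := by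
  obtain ⟨e, he, hsum⟩ := ENNReal.exists_pos_sum_of_countable (tsub_pos_of_lt hS).ne' ℕ
  have hfin (k : ℕ) : hContent n δ (E k) ≠ ⊤ := fun htop => by
    have := (ENNReal.le_tsum k).trans_lt hS
    simp [htop, ENNReal.mul_top (hc0 k)] at this
  have hlt (k : ℕ) : hContent n δ (E k) < hContent n δ (E k) + e k / c k :=
    ENNReal.lt_add_right (hfin k)
      (ENNReal.div_ne_zero.2 ⟨ENNReal.coe_ne_zero.2 (he k).ne', hc k⟩)
  choose P hcover hP using fun k => exists_cubes_of_hContent_lt (hlt k)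
  refine ⟨P, hcover, ?_⟩
  calc ∑' k, c k * ∑' i, ENNReal.ofReal (P k i).side ^ δ
      ≤ ∑' k, (c k * hContent n δ (E k) + e k) := by
        refine ENNReal.tsum_le_tsum fun k => ?_
        grw [hP k, mul_add, ENNReal.mul_div_cancel (hc0 k) (hc k)]
    _ = ∑' k, c k * hContent n δ (E k) + ∑' k, (e k : ℝ≥0∞) := ENNReal.tsum_add
    _ < ∑' k, c k * hContent n δ (E k) + (S - ∑' k, c k * hContent n δ (E k)) :=
        ENNReal.add_lt_add_left hS.ne_top hsum
    _ = S := add_tsub_cancel_of_le hS.le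

theorem hContent_iUnion_nat_le (E : ℕ → Set (Fin n → ℝ)) :
    hContent n δ (⋃ k, E k) ≤ ∑' k, hContent n δ (E k) := by
  refine le_of_forall_gt_imp_ge_of_dense fun S hS => ?_
  obtain ⟨P, hcover, hP⟩ := exists_cubes_of_tsum_hContent_lt (c := fun _ => 1)
    (fun _ => one_ne_zero) (fun _ => ENNReal.one_ne_top) (by simpa only [one_mul] using hS)
  calc hContent n δ (⋃ k, E k)
      ≤ ∑' p : ℕ × ℕ, ENNReal.ofReal (P p.1 p.2).side ^ δ := by
        refine hContent_le_tsum ?_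
        rw [iUnion_prod']
        exact iUnion_mono hcover
    _ = ∑' k, ∑' i, ENNReal.ofReal (P k i).side ^ δ :=
        ENNReal.tsum_prod (f := fun k i => ENNReal.ofReal (P k i).side ^ δ)
    _ ≤ S := by simpa only [one_mul] using hP.le

/-- The Hausdorff content as an outer measure, which gives access to the countable subadditivity
lemmas for outer measures. -/
def hContentOuter (n : ℕ) (hδ : 0 < δ) : OuterMeasure (Fin n → ℝ) where
  measureOf := hContent n δ
  empty := hContent_empty hδ
  mono := hContent_mono
  iUnion_nat E _ := hContent_iUnion_nat_le E

theorem hContent_iUnion_le (hδ : 0 < δ) {ι : Type*} [Countable ι] (E : ι → Set (Fin n → ℝ)) :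
    hContent n δ (⋃ i, E i) ≤ ∑' i, hContent n δ (E i) :=
  measure_iUnion_le (μ := hContentOuter n hδ) E

theorem hContent_le_inter_add_diff (hδ : 0 < δ) (E F : Set (Fin n → ℝ)) :
    hContent n δ E ≤ hContent n δ (E ∩ F) + hContent n δ (E \ F) :=
  measure_le_inter_add_sdiff (hContentOuter n hδ) E F

theorem hContent_cube_le (hδ : 0 < δ) (Q : Cube n) :
    hContent n δ Q.toSet ≤ ENNReal.ofReal Q.side ^ δ := by
  refine ENNReal.le_of_forall_pos_le_add fun ε hε _ => ?_
  obtain ⟨P, hP⟩ := exists_cubes_tsum_lt (n := n) hδ (ENNReal.coe_ne_zero.2 hε.ne')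
  let R : ℕ → Cube n
    | 0 => Q
    | k + 1 => P k
  calc hContent n δ Q.toSet
      ≤ ∑' k, ENNReal.ofReal (R k).side ^ δ :=
        hContent_le_tsum (subset_iUnion_of_subset 0 subset_rfl)
    _ = ENNReal.ofReal Q.side ^ δ + ∑' k, ENNReal.ofReal (P k).side ^ δ :=
        tsum_eq_zero_add' ENNReal.summable
    _ ≤ ENNReal.ofReal Q.side ^ δ + ε := by gcongr

theorem rpow_side_le_hContent_cube (hδ : 0 < δ) (hδn : δ ≤ n) (Q : Cube n) :
    ENNReal.ofReal Q.side ^ δ ≤ hContent n δ Q.toSet := by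
  refine le_of_forall_gt_imp_ge_of_dense fun b hb => ?_
  obtain ⟨P, hcover, hP⟩ := exists_cubes_of_hContent_lt hb
  refine le_trans ?_ hP.le
  by_cases hbig : ∃ i, Q.side ≤ (P i).side
  · obtain ⟨i, hi⟩ := hbig
    calc ENNReal.ofReal Q.side ^ δ ≤ ENNReal.ofReal (P i).side ^ δ := by gcongr
      _ ≤ _ := ENNReal.le_tsum i
  push Not at hbig
  -- All covering cubes are smaller than `Q`, so `ℓ(P)ⁿ ≤ ℓ(Q)ⁿ⁻ᵟ ℓ(P)ᵟ` for each of them, and it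
  -- suffices to compare Lebesgue volumes.
  have hpow (R : Cube n) : ENNReal.ofReal R.side ^ n =
      ENNReal.ofReal R.side ^ (n - δ) * ENNReal.ofReal R.side ^ δ := by
    rw [← ENNReal.rpow_add _ _ (ENNReal.ofReal_pos.2 R.side_pos).ne' ENNReal.ofReal_ne_top,
      sub_add_cancel, ENNReal.rpow_natCast]
  have hvol : ENNReal.ofReal Q.side ^ (n - δ) * ENNReal.ofReal Q.side ^ δ ≤
      ENNReal.ofReal Q.side ^ (n - δ) * ∑' i, ENNReal.ofReal (P i).side ^ δ :=
    calc _ = volume Q.toSet := by rw [Q.volume_toSet, hpow]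
      _ ≤ ∑' i, volume (P i).toSet := (measure_mono hcover).trans (measure_iUnion_le _)
      _ ≤ ∑' i, ENNReal.ofReal Q.side ^ (n - δ) * ENNReal.ofReal (P i).side ^ δ := by
        refine ENNReal.tsum_le_tsum fun i => ?_
        rw [(P i).volume_toSet, hpow]
        gcongr
        exact (hbig i).le
      _ = _ := ENNReal.tsum_mul_left
  have hne : ENNReal.ofReal Q.side ^ (n - δ) ≠ 0 :=
    (ENNReal.rpow_pos (ENNReal.ofReal_pos.2 Q.side_pos) ENNReal.ofReal_ne_top).ne'
  exact (ENNReal.mul_le_mul_iff_right hne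
    (ENNReal.rpow_ne_top_of_nonneg (sub_nonneg.2 hδn) ENNReal.ofReal_ne_top)).1 hvol

theorem hContent_cube (hδ : 0 < δ) (hδn : δ ≤ n) (Q : Cube n) :
    hContent n δ Q.toSet = ENNReal.ofReal Q.side ^ δ :=
  (hContent_cube_le hδ Q).antisymm (rpow_side_le_hContent_cube hδ hδn Q)

theorem hContent_cube_ne_zero (hδ : 0 < δ) (hδn : δ ≤ n) (Q : Cube n) :
    hContent n δ Q.toSet ≠ 0 := by
  rw [hContent_cube hδ hδn]
  exact (ENNReal.rpow_pos (ENNReal.ofReal_pos.2 Q.side_pos) ENNReal.ofReal_ne_top).ne'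

theorem hContent_cube_ne_top (hδ : 0 < δ) (Q : Cube n) : hContent n δ Q.toSet ≠ ⊤ :=
  ne_top_of_le_ne_top (ENNReal.rpow_ne_top_of_nonneg hδ.le ENNReal.ofReal_ne_top)
    (hContent_cube_le hδ Q)

theorem ofReal_side_dilate_rpow (hδ : 0 ≤ δ) (Q : Cube n) {t : ℝ} (ht : 0 < t) :
    ENNReal.ofReal (Q.dilate t ht).side ^ δ =
      ENNReal.ofReal t ^ δ * ENNReal.ofReal Q.side ^ δ := by
  rw [← ENNReal.mul_rpow_of_nonneg _ _ hδ, ← ENNReal.ofReal_mul ht.le]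
  rfl

theorem hContent_cube_dilate_three (hδ : 0 < δ) (hδn : δ ≤ n) (Q : Cube n) :
    hContent n δ (Q.dilate 3 three_pos).toSet = 3 ^ δ * hContent n δ Q.toSet := by
  rw [hContent_cube hδ hδn, hContent_cube hδ hδn, ofReal_side_dilate_rpow hδ.le,
    ENNReal.ofReal_ofNat]

theorem hContent_closedBall_le (hδ : 0 < δ) (x : Fin n → ℝ) {r : ℝ} (hr : 0 < r) :
    hContent n δ (Metric.closedBall x r) ≤ ENNReal.ofReal (3 * r) ^ δ := by
  let Q : Cube n := ⟨fun i => x i - r, 3 * r, by positivity⟩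
  have hsub : Metric.closedBall x r ⊆ Q.toSet := by
    intro y hy i
    rw [Metric.mem_closedBall, dist_pi_le_iff hr.le] at hy
    have := abs_le.1 (hy i)
    simp only [Q]
    constructor <;> linarith
  exact (hContent_mono hsub).trans (hContent_cube_le hδ Q)

/-! ### Covering estimates -/

theorem hContent_le_of_rpow_le_closedBall (hδ : 0 < δ) {ν : Measure (Fin n → ℝ)}
    {G : Set (Fin n → ℝ)}
    (hG : ∀ x ∈ G, ∃ r : ℝ, 0 < r ∧ ENNReal.ofReal r ^ δ ≤ ν (Metric.closedBall x r)) :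
    hContent n δ G ≤ 15 ^ δ * ν univ := by
  rcases eq_or_ne (ν univ) ⊤ with htop | hfin
  · rw [htop, ENNReal.mul_top (ENNReal.rpow_pos (by norm_num) (by norm_num)).ne']
    exact le_top
  choose! r hr hrν using hG
  have hbdd : ∀ x ∈ G, r x ≤ (ν univ ^ δ⁻¹).toReal := fun x hx => by
    rw [← ENNReal.ofReal_le_iff_le_toReal (ENNReal.rpow_ne_top_of_nonneg (by positivity) hfin),
      ENNReal.le_rpow_inv_iff hδ]
    exact (hrν x hx).trans (measure_mono (subset_univ _))
  obtain ⟨u, huG, hdisj, hcover⟩ :=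
    Vitali.exists_disjoint_subfamily_covering_enlargement_closedBall G id r _ hbdd 5 (by norm_num)
  have : Countable u := (hdisj.countable_of_nonempty_interior fun x hx =>
    (Metric.nonempty_ball.2 (hr x (huG hx))).mono Metric.ball_subset_interior_closedBall).to_subtype
  have hsub : G ⊆ ⋃ b : u, Metric.closedBall (b : Fin n → ℝ) (5 * r b) := fun x hx => by
    obtain ⟨b, hb, hxb⟩ := hcover x hx
    exact mem_iUnion.2 ⟨⟨b, hb⟩, hxb (Metric.mem_closedBall_self (hr x hx).le)⟩
  calc hContent n δ G
      ≤ ∑' b : u, hContent n δ (Metric.closedBall (b : Fin n → ℝ) (5 * r b)) :=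
        (hContent_mono hsub).trans (hContent_iUnion_le hδ _)
    _ ≤ ∑' b : u, 15 ^ δ * ν (Metric.closedBall (b : Fin n → ℝ) (r b)) := by
        refine ENNReal.tsum_le_tsum fun b => ?_
        have hb := hr b (huG b.2)
        grw [hContent_closedBall_le hδ _ (by positivity), ← mul_assoc,
          ENNReal.ofReal_mul (by norm_num), ENNReal.mul_rpow_of_nonneg _ _ hδ.le,
          hrν b (huG b.2)]
        norm_num
    _ = 15 ^ δ * ∑' b : u, ν (Metric.closedBall (b : Fin n → ℝ) (r b)) := ENNReal.tsum_mul_left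
    _ ≤ 15 ^ δ * ν univ := by
        gcongr
        refine (tsum_meas_le_meas_iUnion_of_disjoint ν (fun _ => measurableSet_closedBall) ?_).trans
          (measure_mono (subset_univ _))
        intro b c hbc
        exact hdisj b.2 c.2 (Subtype.coe_injective.ne hbc)

/-- The atomic measure putting mass `wᵢ ℓ(Pᵢ)ᵟ` at the lower corner of each cube `Pᵢ`. It turns a
weighted family of cubes into a measure to which the Vitali covering theorem applies. -/
def cornerMeasure (δ : ℝ) {ι : Type*} (w : ι → ℝ≥0∞) (P : ι → Cube n) : Measure (Fin n → ℝ) :=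
  Measure.sum fun i => (w i * ENNReal.ofReal (P i).side ^ δ) • Measure.dirac (P i).corner

theorem cornerMeasure_univ {ι : Type*} (w : ι → ℝ≥0∞) (P : ι → Cube n) :
    cornerMeasure δ w P univ = ∑' i, w i * ENNReal.ofReal (P i).side ^ δ := by
  simp only [cornerMeasure, Measure.sum_apply _ MeasurableSet.univ, Measure.smul_apply,
    measure_univ, smul_eq_mul, mul_one]

theorem tsum_mul_hContent_inter_le_cornerMeasure (hδ : 0 < δ) {ι : Type*} (w : ι → ℝ≥0∞)
    (P : ι → Cube n) {Q : Cube n} {x : Fin n → ℝ} (hxQ : x ∈ Q.toSet)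
    (hxP : x ∉ ⋃ i, ((P i).dilate 3 three_pos).toSet) :
    ∑' i, w i * hContent n δ (Q.toSet ∩ (P i).toSet) ≤
      cornerMeasure δ w P (Metric.closedBall x (2 * Q.side)) := by
  rw [cornerMeasure, Measure.sum_apply _ measurableSet_closedBall]
  refine ENNReal.tsum_le_tsum fun i => ?_
  rcases ((P i).toSet ∩ Q.toSet).eq_empty_or_nonempty with hempty | hmeet
  · rw [inter_comm, hempty, hContent_empty hδ, mul_zero]
    exact zero_le
  have hside : (P i).side ≤ Q.side := le_of_not_ge fun hle =>
    hxP (mem_iUnion.2 ⟨i, Cube.toSet_subset_dilate_three hmeet hle hxQ⟩)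
  rw [Measure.smul_apply, Measure.dirac_apply_of_mem (Cube.corner_mem_closedBall hmeet hside hxQ),
    smul_eq_mul, mul_one]
  gcongr
  exact (hContent_mono inter_subset_right).trans (hContent_cube_le hδ _)

theorem hContent_iUnion_dilate_le (hδ : 0 < δ) {ι : Type*} [Countable ι] (P : ι → Cube n)
    {t : ℝ} (ht : 0 < t) :
    hContent n δ (⋃ i, ((P i).dilate t ht).toSet) ≤
      ENNReal.ofReal t ^ δ * ∑' i, ENNReal.ofReal (P i).side ^ δ :=
  calc hContent n δ (⋃ i, ((P i).dilate t ht).toSet)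
      ≤ ∑' i, ENNReal.ofReal ((P i).dilate t ht).side ^ δ :=
        (hContent_iUnion_le hδ _).trans (ENNReal.tsum_le_tsum fun i => hContent_cube_le hδ _)
    _ = ENNReal.ofReal t ^ δ * ∑' i, ENNReal.ofReal (P i).side ^ δ := by
        simp only [ofReal_side_dilate_rpow hδ.le, ENNReal.tsum_mul_left]

theorem hContent_setOf_rpow_side_le_tsum_inter_le (hδ : 0 < δ) {ι : Type*} [Countable ι]
    {w : ι → ℝ≥0∞} (hw : ∀ i, 1 ≤ w i) (P : ι → Cube n) :
    hContent n δ {x | ∃ Q : Cube n, x ∈ Q.toSet ∧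
        ENNReal.ofReal Q.side ^ δ ≤ ∑' i, w i * hContent n δ (Q.toSet ∩ (P i).toSet)} ≤
      2 * 30 ^ δ * ∑' i, w i * ENNReal.ofReal (P i).side ^ δ := by
  set G := {x | ∃ Q : Cube n, x ∈ Q.toSet ∧
    ENNReal.ofReal Q.side ^ δ ≤ ∑' i, w i * hContent n δ (Q.toSet ∩ (P i).toSet)}
  set A := ⋃ i, ((P i).dilate 3 three_pos).toSet
  set μ := cornerMeasure δ w P
  have hnear : hContent n δ (G ∩ A) ≤ 30 ^ δ * μ univ :=
    calc hContent n δ (G ∩ A)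
        ≤ ENNReal.ofReal 3 ^ δ * ∑' i, ENNReal.ofReal (P i).side ^ δ :=
          (hContent_mono inter_subset_right).trans (hContent_iUnion_dilate_le hδ P three_pos)
      _ ≤ 30 ^ δ * μ univ := by
          rw [cornerMeasure_univ]
          gcongr with i
          · norm_num
          · exact le_mul_of_one_le_left zero_le (hw i)
  have hfar : hContent n δ (G \ A) ≤ 30 ^ δ * μ univ :=
    calc hContent n δ (G \ A) ≤ 15 ^ δ * ((2 : ℝ≥0∞) ^ δ • μ) univ := by
          refine hContent_le_of_rpow_le_closedBall hδ ?_
          rintro x ⟨⟨Q, hxQ, hQ⟩, hxA⟩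
          refine ⟨2 * Q.side, mul_pos two_pos Q.side_pos, ?_⟩
          rw [ENNReal.ofReal_mul two_pos.le, ENNReal.mul_rpow_of_nonneg _ _ hδ.le,
            ENNReal.ofReal_ofNat, Measure.smul_apply, smul_eq_mul]
          gcongr
          exact hQ.trans (tsum_mul_hContent_inter_le_cornerMeasure hδ w P hxQ hxA)
      _ = 30 ^ δ * μ univ := by
          rw [Measure.smul_apply, smul_eq_mul, ← mul_assoc, ← ENNReal.mul_rpow_of_nonneg _ _ hδ.le]
          norm_num
  calc hContent n δ G ≤ hContent n δ (G ∩ A) + hContent n δ (G \ A) :=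
        hContent_le_inter_add_diff hδ G A
    _ ≤ 30 ^ δ * μ univ + 30 ^ δ * μ univ := add_le_add hnear hfar
    _ = 2 * 30 ^ δ * ∑' i, w i * ENNReal.ofReal (P i).side ^ δ := by
        rw [cornerMeasure_univ]
        ring

/-! ### Choquet integrals and dyadic levels -/

theorem lintegral_Ioi_eq_tsum_Ioc (φ : ℝ → ℝ≥0∞) {a : ℝ} (ha : 0 < a) :
    ∫⁻ t in Ioi a, φ t = ∑' k : ℕ, ∫⁻ t in Ioc (a * 2 ^ k) (a * 2 ^ (k + 1)), φ t := by
  have hmono : Monotone fun k : ℕ => a * 2 ^ k := fun _ _ h => by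
    dsimp only
    gcongr
    exact one_le_two
  have hunbdd : ¬BddAbove (range fun k : ℕ => a * 2 ^ k) :=
    Filter.not_bddAbove_of_tendsto_atTop
      ((tendsto_pow_atTop_atTop_of_one_lt one_lt_two).const_mul_atTop ha)
  have hunion : ⋃ k : ℕ, Ioc (a * 2 ^ k) (a * 2 ^ (k + 1)) = Ioi a := by
    simpa using iUnion_Ioc_map_succ_eq_Ioi (fun k => hmono (Nat.zero_le k)) hunbdd
  rw [← hunion]
  exact lintegral_iUnion (fun _ => measurableSet_Ioc) hmono.pairwise_disjoint_on_Ioc_succ _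

theorem volume_Ioc_mul_two_pow {a : ℝ} (ha : 0 ≤ a) (k : ℕ) :
    volume (Ioc (a * 2 ^ k) (a * 2 ^ (k + 1))) = ENNReal.ofReal a * 2 ^ k := by
  rw [Real.volume_Ioc, pow_succ, ← mul_assoc, mul_two, add_sub_cancel_right,
    ENNReal.ofReal_mul ha, ENNReal.ofReal_pow two_pos.le, ENNReal.ofReal_ofNat]

theorem lintegral_Ioi_le_tsum_two_pow {φ : ℝ → ℝ≥0∞} (hφ : Antitone φ) {a : ℝ} (ha : 0 < a) :
    ∫⁻ t in Ioi a, φ t ≤ ENNReal.ofReal a * ∑' k : ℕ, 2 ^ k * φ (a * 2 ^ k) := by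
  rw [lintegral_Ioi_eq_tsum_Ioc φ ha, ← ENNReal.tsum_mul_left]
  refine ENNReal.tsum_le_tsum fun k => ?_
  calc ∫⁻ t in Ioc (a * 2 ^ k) (a * 2 ^ (k + 1)), φ t
      ≤ ∫⁻ _ in Ioc (a * 2 ^ k) (a * 2 ^ (k + 1)), φ (a * 2 ^ k) :=
        setLIntegral_mono' measurableSet_Ioc fun t ht => hφ ht.1.le
    _ = ENNReal.ofReal a * (2 ^ k * φ (a * 2 ^ k)) := by
        rw [setLIntegral_const, volume_Ioc_mul_two_pow ha.le]
        ring

theorem tsum_two_pow_le_lintegral_Ioi {φ : ℝ → ℝ≥0∞} (hφ : Antitone φ) {a : ℝ} (ha : 0 < a) :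
    ENNReal.ofReal a * ∑' k : ℕ, 2 ^ k * φ (a * 2 ^ (k + 1)) ≤ ∫⁻ t in Ioi a, φ t := by
  rw [lintegral_Ioi_eq_tsum_Ioc φ ha, ← ENNReal.tsum_mul_left]
  refine ENNReal.tsum_le_tsum fun k => ?_
  calc ENNReal.ofReal a * (2 ^ k * φ (a * 2 ^ (k + 1)))
      = ∫⁻ _ in Ioc (a * 2 ^ k) (a * 2 ^ (k + 1)), φ (a * 2 ^ (k + 1)) := by
        rw [setLIntegral_const, volume_Ioc_mul_two_pow ha.le]
        ring
    _ ≤ ∫⁻ t in Ioc (a * 2 ^ k) (a * 2 ^ (k + 1)), φ t :=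
        setLIntegral_mono' measurableSet_Ioc fun t ht => hφ ht.2

theorem antitone_hContent_setOf_lt (E : Set (Fin n → ℝ)) (f : (Fin n → ℝ) → ℝ) :
    Antitone fun t : ℝ => hContent n δ {x | x ∈ E ∧ t < f x} :=
  fun _ _ h => hContent_mono fun _ hx => ⟨hx.1, h.trans_lt hx.2⟩

theorem integH_mono_set (f : (Fin n → ℝ) → ℝ) {E F : Set (Fin n → ℝ)} (h : E ⊆ F) :
    integH n δ f E ≤ integH n δ f F :=
  lintegral_mono fun _ => hContent_mono fun _ hx => ⟨h hx.1, hx.2⟩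

theorem integH_abs_indicator (f : (Fin n → ℝ) → ℝ) (D E : Set (Fin n → ℝ)) :
    integH n δ (fun x => |D.indicator f x|) E = integH n δ (fun x => |f x|) (E ∩ D) := by
  refine setLIntegral_congr_fun measurableSet_Ioi fun t ht => ?_
  have ht : 0 < t := ht
  congr 1
  ext x
  by_cases hx : x ∈ D <;> simp [hx, ht.le]

theorem integH_le_tsum_two_pow (E : Set (Fin n → ℝ)) (f : (Fin n → ℝ) → ℝ) {a : ℝ} (ha : 0 < a) :
    integH n δ f E ≤ ENNReal.ofReal a *
      (hContent n δ E + ∑' k : ℕ, 2 ^ k * hContent n δ {x | x ∈ E ∧ a * 2 ^ k < f x}) := by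
  rw [integH, ← Ioc_union_Ioi_eq_Ioi ha.le, mul_add]
  refine (lintegral_union_le _ _ _).trans (add_le_add ?_
    (lintegral_Ioi_le_tsum_two_pow (antitone_hContent_setOf_lt E f) ha))
  calc ∫⁻ t in Ioc 0 a, hContent n δ {x | x ∈ E ∧ t < f x}
      ≤ ∫⁻ _ in Ioc 0 a, hContent n δ E := lintegral_mono fun _ => hContent_mono fun _ hx => hx.1
    _ = ENNReal.ofReal a * hContent n δ E := by
        rw [setLIntegral_const, Real.volume_Ioc, sub_zero, mul_comm]

theorem tsum_two_pow_le_integH (E : Set (Fin n → ℝ)) (f : (Fin n → ℝ) → ℝ) {a : ℝ} (ha : 0 < a) :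
    ENNReal.ofReal a * ∑' k : ℕ, 2 ^ k * hContent n δ {x | x ∈ E ∧ a * 2 ^ (k + 1) < f x} ≤
      integH n δ f E :=
  (tsum_two_pow_le_lintegral_Ioi (antitone_hContent_setOf_lt E f) ha).trans
    (lintegral_mono_set (Ioi_subset_Ioi ha.le))

/-! ### The maximal operator -/

theorem integH_div_le_maxOp (f : (Fin n → ℝ) → ℝ) {Q : Cube n} {x : Fin n → ℝ}
    (hx : x ∈ Q.toSet) :
    integH n δ (fun y => |f y|) Q.toSet / hContent n δ Q.toSet ≤ maxOp n δ f x :=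
  le_iSup₂ (f := fun (Q : Cube n) (_ : x ∈ Q.toSet) =>
    integH n δ (fun y => |f y|) Q.toSet / hContent n δ Q.toSet) Q hx

theorem integH_le_maxOp_mul (hδ : 0 < δ) (hδn : δ ≤ n) (f : (Fin n → ℝ) → ℝ) {Q : Cube n}
    {x : Fin n → ℝ} (hx : x ∈ Q.toSet) :
    integH n δ (fun y => |f y|) Q.toSet ≤ maxOp n δ f x * hContent n δ Q.toSet :=
  (ENNReal.div_le_iff (hContent_cube_ne_zero hδ hδn Q) (hContent_cube_ne_top hδ Q)).1
    (integH_div_le_maxOp f hx)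

theorem hContent_le_tsum_of_lt_average {E : Set (Fin n → ℝ)} (hE : hContent n δ E ≠ ⊤)
    {f : (Fin n → ℝ) → ℝ} {a : ℝ} (ha : 0 < a)
    (hlt : ENNReal.ofReal (2 * a) < integH n δ f E / hContent n δ E) :
    hContent n δ E ≤ ∑' k : ℕ, 2 ^ k * hContent n δ {x | x ∈ E ∧ a * 2 ^ k < f x} := by
  have h : ENNReal.ofReal a * (hContent n δ E + hContent n δ E) ≤ ENNReal.ofReal a *
      (hContent n δ E + ∑' k : ℕ, 2 ^ k * hContent n δ {x | x ∈ E ∧ a * 2 ^ k < f x}) :=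
    calc ENNReal.ofReal a * (hContent n δ E + hContent n δ E)
        = ENNReal.ofReal (2 * a) * hContent n δ E := by
          rw [ENNReal.ofReal_mul two_pos.le, ENNReal.ofReal_ofNat]
          ring
      _ ≤ integH n δ f E := (ENNReal.mul_lt_of_lt_div hlt).le
      _ ≤ _ := integH_le_tsum_two_pow E f ha
  exact (ENNReal.add_le_add_iff_left hE).1
    ((ENNReal.mul_le_mul_iff_right (ENNReal.ofReal_pos.2 ha).ne' ENNReal.ofReal_ne_top).1 h)

theorem tsum_mul_hContent_inter_le_of_subset_iUnion (hδ : 0 < δ) (c : ℕ → ℝ≥0∞)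
    {E : ℕ → Set (Fin n → ℝ)} {P : ℕ → ℕ → Cube n} (hE : ∀ k, E k ⊆ ⋃ i, (P k i).toSet)
    (A : Set (Fin n → ℝ)) :
    ∑' k, c k * hContent n δ (A ∩ E k) ≤
      ∑' p : ℕ × ℕ, c p.1 * hContent n δ (A ∩ (P p.1 p.2).toSet) := by
  rw [ENNReal.tsum_prod (f := fun k i => c k * hContent n δ (A ∩ (P k i).toSet))]
  refine ENNReal.tsum_le_tsum fun k => ?_
  rw [ENNReal.tsum_mul_left]
  gcongr
  refine (hContent_mono ?_).trans (hContent_iUnion_le hδ _)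
  rw [← inter_iUnion]
  exact inter_subset_inter_right _ (hE k)

theorem hContent_setOf_lt_maxOp_le_tsum (hδ : 0 < δ) (hδn : δ ≤ n) (f : (Fin n → ℝ) → ℝ) {a : ℝ}
    (ha : 0 < a) :
    hContent n δ {x | ENNReal.ofReal (2 * a) < maxOp n δ f x} ≤
      2 * 30 ^ δ * ∑' k : ℕ, 2 ^ k * hContent n δ {x | a * 2 ^ k < |f x|} := by
  have h30 : (30 : ℝ≥0∞) ^ δ ≠ ⊤ := ENNReal.rpow_ne_top_of_nonneg hδ.le (by norm_num)
  rw [← ENNReal.div_le_iff' (by positivity) (ENNReal.mul_ne_top ENNReal.ofNat_ne_top h30)]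
  refine le_of_forall_gt_imp_ge_of_dense fun S hS => ?_
  obtain ⟨P, hcover, hP⟩ := exists_cubes_of_tsum_hContent_lt
    (fun k => pow_ne_zero k two_ne_zero) (fun k => ENNReal.pow_ne_top ENNReal.ofNat_ne_top) hS
  refine ENNReal.div_le_of_le_mul' ?_
  calc hContent n δ {x | ENNReal.ofReal (2 * a) < maxOp n δ f x}
      ≤ hContent n δ {x | ∃ Q : Cube n, x ∈ Q.toSet ∧ ENNReal.ofReal Q.side ^ δ ≤
          ∑' p : ℕ × ℕ, 2 ^ p.1 * hContent n δ (Q.toSet ∩ (P p.1 p.2).toSet)} := by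
        refine hContent_mono fun x hx => ?_
        simp only [mem_ofPred_eq, maxOp, lt_iSup_iff] at hx
        obtain ⟨Q, hxQ, hQ⟩ := hx
        refine ⟨Q, hxQ, ?_⟩
        rw [← hContent_cube hδ hδn]
        exact (hContent_le_tsum_of_lt_average (hContent_cube_ne_top hδ Q) ha hQ).trans
          (tsum_mul_hContent_inter_le_of_subset_iUnion hδ _ hcover Q.toSet)
    _ ≤ 2 * 30 ^ δ * ∑' p : ℕ × ℕ, 2 ^ p.1 * ENNReal.ofReal (P p.1 p.2).side ^ δ :=
        hContent_setOf_rpow_side_le_tsum_inter_le hδ (w := fun p : ℕ × ℕ => 2 ^ p.1)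
          (fun _ => one_le_pow₀ one_le_two) fun p => P p.1 p.2
    _ ≤ 2 * 30 ^ δ * S := by
        rw [ENNReal.tsum_prod (f := fun k i => 2 ^ k * ENNReal.ofReal (P k i).side ^ δ)]
        simp only [ENNReal.tsum_mul_left]
        gcongr

theorem mul_hContent_setOf_lt_maxOp_le (hδ : 0 < δ) (hδn : δ ≤ n) (f : (Fin n → ℝ) → ℝ) {u : ℝ}
    (hu : 0 < u) :
    ENNReal.ofReal u * hContent n δ {x | ENNReal.ofReal u < maxOp n δ f x} ≤
      8 * 30 ^ δ * integH n δ (fun x => |f x|) univ := by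
  have hu4 : 0 < u / 4 := by positivity
  calc ENNReal.ofReal u * hContent n δ {x | ENNReal.ofReal u < maxOp n δ f x}
      = ENNReal.ofReal (4 * (u / 4)) *
          hContent n δ {x | ENNReal.ofReal (2 * (u / 4 * 2)) < maxOp n δ f x} := by ring_nf
    _ ≤ ENNReal.ofReal (4 * (u / 4)) *
          (2 * 30 ^ δ * ∑' k : ℕ, 2 ^ k * hContent n δ {x | u / 4 * 2 * 2 ^ k < |f x|}) := by
        grw [hContent_setOf_lt_maxOp_le_tsum hδ hδn f (mul_pos hu4 two_pos)]
    _ = 8 * 30 ^ δ * (ENNReal.ofReal (u / 4) *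
          ∑' k : ℕ, 2 ^ k * hContent n δ {x | x ∈ univ ∧ u / 4 * 2 ^ (k + 1) < |f x|}) := by
        simp only [mem_univ, true_and, pow_succ', mul_assoc,
          ENNReal.ofReal_mul (p := 4) zero_le_four, ENNReal.ofReal_ofNat]
        ring
    _ ≤ 8 * 30 ^ δ * integH n δ (fun x => |f x|) univ := by
        grw [tsum_two_pow_le_integH univ _ hu4]

theorem maxOp_le_max_indicator_dilate (hδ : 0 < δ) (hδn : δ ≤ n) (f : (Fin n → ℝ) → ℝ)
    {Q₀ : Cube n} {x y : Fin n → ℝ} (hx : x ∈ Q₀.toSet) (hy : y ∈ Q₀.toSet) :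
    maxOp n δ f x ≤ max (maxOp n δ ((Q₀.dilate 3 three_pos).toSet.indicator f) x)
      (3 ^ δ * maxOp n δ f y) := by
  refine iSup₂_le fun Q hxQ => ?_
  rcases le_total Q.side Q₀.side with hside | hside
  · refine le_max_of_le_left (le_trans (le_of_eq ?_) (integH_div_le_maxOp _ hxQ))
    rw [integH_abs_indicator,
      inter_eq_left.2 (Cube.toSet_subset_dilate_three ⟨x, hx, hxQ⟩ hside)]
  · refine le_max_of_le_right (ENNReal.div_le_of_le_mul ?_)
    calc integH n δ (fun y => |f y|) Q.toSet
        ≤ integH n δ (fun y => |f y|) (Q.dilate 3 three_pos).toSet :=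
          integH_mono_set _ Q.toSet_subset_dilate_three_self
      _ ≤ maxOp n δ f y * hContent n δ (Q.dilate 3 three_pos).toSet :=
          integH_le_maxOp_mul hδ hδn f (Cube.toSet_subset_dilate_three ⟨x, hxQ, hx⟩ hside hy)
      _ = 3 ^ δ * maxOp n δ f y * hContent n δ Q.toSet := by
          rw [hContent_cube_dilate_three hδ hδn]
          ring

theorem mul_hContent_setOf_lt_maxOp_cube_le (hδ : 0 < δ) (hδn : δ ≤ n) (f : (Fin n → ℝ) → ℝ)
    {Q₀ : Cube n} {y : Fin n → ℝ} (hy : y ∈ Q₀.toSet) {u : ℝ} (hu : 0 < u) :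
    ENNReal.ofReal u * hContent n δ {x | x ∈ Q₀.toSet ∧ ENNReal.ofReal u < maxOp n δ f x} ≤
      8 * 90 ^ δ * maxOp n δ f y * hContent n δ Q₀.toSet := by
  rcases le_or_gt (ENNReal.ofReal u) (3 ^ δ * maxOp n δ f y) with hsmall | hlarge
  · have h3 : (3 : ℝ≥0∞) ^ δ ≤ 8 * 90 ^ δ :=
      (ENNReal.rpow_le_rpow (by norm_num) hδ.le).trans (le_mul_of_one_le_left zero_le (by norm_num))
    calc _ ≤ 3 ^ δ * maxOp n δ f y * hContent n δ Q₀.toSet :=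
          mul_le_mul' hsmall (hContent_mono fun _ hx => hx.1)
      _ ≤ 8 * 90 ^ δ * maxOp n δ f y * hContent n δ Q₀.toSet := by gcongr
  · set D := (Q₀.dilate 3 three_pos).toSet
    have hsub : {x | x ∈ Q₀.toSet ∧ ENNReal.ofReal u < maxOp n δ f x} ⊆
        {x | ENNReal.ofReal u < maxOp n δ (D.indicator f) x} := fun x ⟨hx, hux⟩ =>
      (lt_max_iff.1 (hux.trans_le (maxOp_le_max_indicator_dilate hδ hδn f hx hy))).resolve_right
        hlarge.not_gt
    calc _ ≤ 8 * 30 ^ δ * integH n δ (fun x => |D.indicator f x|) univ := by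
          refine (mul_le_mul_right (hContent_mono hsub) _).trans ?_
          exact mul_hContent_setOf_lt_maxOp_le hδ hδn _ hu
      _ = 8 * 30 ^ δ * integH n δ (fun x => |f x|) D := by
          rw [integH_abs_indicator, univ_inter]
      _ ≤ 8 * 30 ^ δ * (maxOp n δ f y * (3 ^ δ * hContent n δ Q₀.toSet)) := by
          grw [integH_le_maxOp_mul hδ hδn f (Q₀.toSet_subset_dilate_three_self hy),
            hContent_cube_dilate_three hδ hδn]
      _ = 8 * 90 ^ δ * maxOp n δ f y * hContent n δ Q₀.toSet := by
          rw [show (90 : ℝ≥0∞) = 30 * 3 by norm_num, ENNReal.mul_rpow_of_nonneg _ _ hδ.le]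
          ring

/-! ### Kolmogorov's inequality -/

theorem lintegral_Ioi_div_rpow {p T : ℝ} (hp : 1 < p) (hT : 0 ≤ T) :
    ∫⁻ t in Ioi T, ENNReal.ofReal ((T / t) ^ p) = ENNReal.ofReal (T / (p - 1)) := by
  rcases hT.eq_or_lt with rfl | hT
  · simp [Real.zero_rpow (zero_lt_one.trans hp).ne']
  have hpow : EqOn (fun t : ℝ => T ^ p * t ^ (-p)) (fun t => (T / t) ^ p) (Ioi T) := fun t ht => by
    dsimp only
    rw [Real.div_rpow hT.le (hT.trans ht).le, Real.rpow_neg (hT.trans ht).le, div_eq_mul_inv]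
  have hint : IntegrableOn (fun t : ℝ => (T / t) ^ p) (Ioi T) :=
    IntegrableOn.congr_fun ((integrableOn_Ioi_rpow_of_lt (neg_lt_neg hp) hT).const_mul _) hpow
      measurableSet_Ioi
  rw [← ofReal_integral_eq_lintegral_ofReal hint
    (ae_restrict_of_forall_mem measurableSet_Ioi fun t ht =>
      Real.rpow_nonneg (div_nonneg hT.le (hT.trans ht).le) p),
    ← setIntegral_congr_fun measurableSet_Ioi hpow, integral_const_mul,
    integral_Ioi_rpow_of_lt (neg_lt_neg hp) hT]
  congr 1
  have hTp : T ^ p * T ^ (-p + 1) = T := by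
    rw [← Real.rpow_add hT, add_neg_cancel_left, Real.rpow_one]
  rw [neg_div, ← div_neg, mul_div_assoc', hTp]
  ring_nf

theorem lintegral_Ioi_le_of_le_div_rpow {φ : ℝ → ℝ≥0∞} {A : ℝ≥0∞} {p T : ℝ} (hp : 1 < p)
    (hT : 0 ≤ T) (hA : ∀ t, φ t ≤ A)
    (hdecay : ∀ t, T < t → φ t ≤ ENNReal.ofReal ((T / t) ^ p) * A) :
    ∫⁻ t in Ioi 0, φ t ≤ ENNReal.ofReal (T + T / (p - 1)) * A := by
  rw [← Ioc_union_Ioi_eq_Ioi hT, ENNReal.ofReal_add hT (div_nonneg hT (sub_pos.2 hp).le), add_mul]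
  refine (lintegral_union_le _ _ _).trans (add_le_add ?_ ?_)
  · calc ∫⁻ t in Ioc 0 T, φ t ≤ ∫⁻ _ in Ioc 0 T, A := lintegral_mono hA
      _ = ENNReal.ofReal T * A := by
        rw [setLIntegral_const, Real.volume_Ioc, sub_zero, mul_comm]
  · calc ∫⁻ t in Ioi T, φ t ≤ ∫⁻ t in Ioi T, ENNReal.ofReal ((T / t) ^ p) * A :=
          setLIntegral_mono' measurableSet_Ioi hdecay
      _ = ENNReal.ofReal (T / (p - 1)) * A := by
        rw [lintegral_mul_const _ (by fun_prop), lintegral_Ioi_div_rpow hp hT]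

theorem integH_rpow_le_of_mul_hContent_setOf_lt_le {F : (Fin n → ℝ) → ℝ≥0∞} {E : Set (Fin n → ℝ)}
    {α s : ℝ} (hα0 : 0 < α) (hα1 : α < 1) (hs : 0 ≤ s)
    (hF : ∀ u : ℝ, 0 < u →
      ENNReal.ofReal u * hContent n δ {x | x ∈ E ∧ ENNReal.ofReal u < F x} ≤
        ENNReal.ofReal s * hContent n δ E) :
    integH n δ (fun x => (F x).toReal ^ α) E ≤
      ENNReal.ofReal (s ^ α / (1 - α)) * hContent n δ E := by
  have hT : 0 ≤ s ^ α := Real.rpow_nonneg hs α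
  have hconst : s ^ α + s ^ α / (α⁻¹ - 1) = s ^ α / (1 - α) := by
    have := sub_pos.2 hα1
    field_simp
    ring
  rw [← hconst]
  refine lintegral_Ioi_le_of_le_div_rpow ((one_lt_inv₀ hα0).2 hα1) hT
    (fun t => hContent_mono fun _ hx => hx.1) fun t ht => ?_
  have ht0 : 0 < t := hT.trans_lt ht
  have hu : 0 < t ^ α⁻¹ := Real.rpow_pos_of_pos ht0 _
  have hsub : {x | x ∈ E ∧ t < (F x).toReal ^ α} ⊆
      {x | x ∈ E ∧ ENNReal.ofReal (t ^ α⁻¹) < F x} := fun x ⟨hxE, hx⟩ =>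
    ⟨hxE, ((ENNReal.ofReal_lt_ofReal_iff_of_nonneg hu.le).2
      ((Real.rpow_inv_lt_iff_of_pos ht0.le ENNReal.toReal_nonneg hα0).2 hx)).trans_le
        ENNReal.ofReal_toReal_le⟩
  calc hContent n δ {x | x ∈ E ∧ t < (F x).toReal ^ α}
      ≤ hContent n δ {x | x ∈ E ∧ ENNReal.ofReal (t ^ α⁻¹) < F x} := hContent_mono hsub
    _ ≤ ENNReal.ofReal s * hContent n δ E / ENNReal.ofReal (t ^ α⁻¹) := by
        rw [ENNReal.le_div_iff_mul_le (.inl (ENNReal.ofReal_pos.2 hu).ne')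
          (.inl ENNReal.ofReal_ne_top), mul_comm]
        exact hF _ hu
    _ = ENNReal.ofReal ((s ^ α / t) ^ α⁻¹) * hContent n δ E := by
        rw [Real.div_rpow hT ht0.le, Real.rpow_rpow_inv hs hα0.ne', ENNReal.ofReal_div_of_pos hu,
          ENNReal.mul_div_right_comm]

theorem integH_rpow_maxOp_le {α : ℝ} (hδ : 0 < δ) (hδn : δ ≤ n) (hα0 : 0 < α) (hα1 : α < 1)
    (f : (Fin n → ℝ) → ℝ) {Q₀ : Cube n} {y : Fin n → ℝ} (hy : y ∈ Q₀.toSet) :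
    integH n δ (fun x => (maxOp n δ f x).toReal ^ α) Q₀.toSet ≤
      ENNReal.ofReal ((8 * 90 ^ δ) ^ α / (1 - α)) * maxOp n δ f y ^ α *
        hContent n δ Q₀.toSet := by
  have hc : 0 < (8 * 90 ^ δ) ^ α / (1 - α) := div_pos (by positivity) (sub_pos.2 hα1)
  rcases eq_or_ne (maxOp n δ f y) ⊤ with htop | hfin
  · rw [htop, ENNReal.top_rpow_of_pos hα0,
      ENNReal.mul_top (ENNReal.ofReal_pos.2 hc).ne',
      ENNReal.top_mul (hContent_cube_ne_zero hδ hδn Q₀)]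
    exact le_top
  have hs : ENNReal.ofReal (8 * 90 ^ δ * (maxOp n δ f y).toReal) =
      8 * 90 ^ δ * maxOp n δ f y := by
    rw [ENNReal.ofReal_mul (by positivity), ENNReal.ofReal_mul (by norm_num),
      ← ENNReal.ofReal_rpow_of_pos (by norm_num), ENNReal.ofReal_ofNat, ENNReal.ofReal_ofNat,
      ENNReal.ofReal_toReal hfin]
  have hKolmogorov := integH_rpow_le_of_mul_hContent_setOf_lt_le (δ := δ) (E := Q₀.toSet) hα0 hα1
    (s := 8 * 90 ^ δ * (maxOp n δ f y).toReal) (by positivity) fun u hu =>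
      hs ▸ mul_hContent_setOf_lt_maxOp_cube_le hδ hδn f hy hu
  refine hKolmogorov.trans_eq ?_
  rw [Real.mul_rpow (by positivity) ENNReal.toReal_nonneg, mul_div_right_comm,
    ENNReal.ofReal_mul hc.le,
    ← ENNReal.ofReal_rpow_of_nonneg ENNReal.toReal_nonneg hα0.le, ENNReal.ofReal_toReal hfin]

theorem stmt19_general (n : ℕ) (δ α : ℝ) (hδ0 : 0 < δ) (hδn : δ ≤ n) (hα0 : 0 < α)
    (hα1 : α < 1) :
    ∃ c : ℝ, 0 < c ∧
      ∀ f : (Fin n → ℝ) → ℝ,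
        (∀ Q₀ : Cube n,
          integH n δ (fun x => (maxOp n δ f x).toReal ^ α) Q₀.toSet /
              hContent n δ Q₀.toSet ≤
            ENNReal.ofReal c *
              ⨅ (x : Fin n → ℝ) (_ : x ∈ Q₀.toSet), maxOp n δ f x ^ α) ∧
        ∀ x : Fin n → ℝ,
          maxOp n δ (fun y => (maxOp n δ f y).toReal ^ α) x ≤
            ENNReal.ofReal c * maxOp n δ f x ^ α := by
  have hc : 0 < (8 * 90 ^ δ) ^ α / (1 - α) := div_pos (by positivity) (sub_pos.2 hα1)
  have hcube (f : (Fin n → ℝ) → ℝ) (Q : Cube n) (x : Fin n → ℝ) (hx : x ∈ Q.toSet) :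
      integH n δ (fun y => (maxOp n δ f y).toReal ^ α) Q.toSet / hContent n δ Q.toSet ≤
        ENNReal.ofReal ((8 * 90 ^ δ) ^ α / (1 - α)) * maxOp n δ f x ^ α :=
    ENNReal.div_le_of_le_mul (integH_rpow_maxOp_le hδ0 hδn hα0 hα1 f hx)
  refine ⟨_, hc, fun f => ⟨fun Q₀ => ?_, fun x => iSup₂_le fun Q hx => ?_⟩⟩
  · simp only [ENNReal.mul_iInf_of_ne (ENNReal.ofReal_pos.2 hc).ne' ENNReal.ofReal_ne_top]
    exact le_iInf₂ (hcube f Q₀)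
  · simpa only [abs_of_nonneg (Real.rpow_nonneg ENNReal.toReal_nonneg α)] using hcube f Q x hx

/-- powers `α ∈ (0,1)` of the maximal function are `A_{1,δ}`-type weights. -/
theorem stmt19 (n : ℕ) (hn : 1 ≤ n) (δ α : ℝ) (hδ0 : 0 < δ) (hδn : δ ≤ n)
    (hα0 : 0 < α) (hα1 : α < 1) :
    ∃ c : ℝ, 0 < c ∧
      ∀ f : (Fin n → ℝ) → ℝ, MemL1loc n δ f →
        AEContent n δ (fun x => maxOp n δ f x < ⊤) →
        (∀ Q₀ : Cube n,
          integH n δ (fun x => (maxOp n δ f x).toReal ^ α) Q₀.toSet /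
              hContent n δ Q₀.toSet ≤
            ENNReal.ofReal c *
              ⨅ (x : Fin n → ℝ) (_ : x ∈ Q₀.toSet), maxOp n δ f x ^ α) ∧
        ∀ x : Fin n → ℝ,
          maxOp n δ (fun y => (maxOp n δ f y).toReal ^ α) x ≤
            ENNReal.ofReal c * maxOp n δ f x ^ α := by
  obtain ⟨c, hc, h⟩ := stmt19_general n δ α hδ0 hδn hα0 hα1
  exact ⟨c, hc, fun f _ _ => h f⟩
end
end
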